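/- arXiv:1212.1529 — 4 statements merged into one kernel-verified Lean document; each statement's English description precedes it below -/
import Mathlib

section
/- Let J be a linear order, let B be a finite Boolean algebra equipped with a family (P_j)_{j∈J} of ideals with P_i ⊆ P_j whenever i ≤ j, and let ≺ be a proper ordering of the atoms of B. Let A be a Boolean subalgebra of B, let a be an atom of A, and let b be the ≺-greatest atom of B lying below a. Then for every h ∈ J: a ∈ P_h if and only if b ∈ P_h. -/
/-!
If the `≺`-greatest atom `b` below `a` lies in an ideal `P h`, then so does every atom `c ≤ a`:
otherwise `P h` would separate `b` from `c`, and properness would give `b ≺ c`, contradicting the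
choice of `b`. Being the join of the finitely many atoms below it, `a` then lies in `P h` as well.
-/

theorem mem_of_isLUB_of_finite {α : Type*} [SemilatticeSup α] {I s : Set α} {x : α}
    (hI : SupClosed I) (hs : s.Finite) (hs_ne : s.Nonempty) (hsI : s ⊆ I) (hx : IsLUB s x) :
    x ∈ I := by
  lift s to Finset α using hs
  rw [Finset.coe_nonempty] at hs_ne
  rw [hx.unique (Finset.isLUB_sup' hs_ne)]
  exact hI.finsetSup'_mem hs_ne hsI

theorem isAtomistic_of_finite (α : Type*) [BooleanAlgebra α] [Finite α] : IsAtomistic α :=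
  letI := Fintype.ofFinite α
  letI := Fintype.toCompleteAtomicBooleanAlgebra α
  inferInstance

theorem not_rel_of_ne_imp_rel {α : Type*} {p : α → Prop} {r : α → α → Prop}
    (h_irrefl : ∀ x, p x → ¬ r x x)
    (h_trans : ∀ x y z, p x → p y → p z → r x y → r y z → r x z)
    {b c : α} (hb : p b) (hc : p c) (hcb : c ≠ b → r c b) : ¬ r b c := by
  intro hbc
  have hne : c ≠ b := by
    rintro rfl
    exact h_irrefl c hc hbc
  exact h_irrefl b hb (h_trans b c b hb hc hb hbc (hcb hne))

/-- The relation `lt` is *proper* for the family `P`: an atom lying in some `P i` precedes every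
atom outside `P i`. An ordering of the atoms is encoded as a relation on the whole type, of which
only the values on atoms matter. -/
def IsProperOnAtoms {α J : Type*} [PartialOrder α] [OrderBot α] (P : J → Set α)
    (lt : α → α → Prop) : Prop :=
  ∀ x y, IsAtom x → IsAtom y → (∃ i, x ∈ P i ∧ y ∉ P i) → lt x y

theorem IsProperOnAtoms.mem_of_not_lt {α J : Type*} [PartialOrder α] [OrderBot α]
    {P : J → Set α} {lt : α → α → Prop} (h_proper : IsProperOnAtoms P lt) {x y : α} {i : J}
    (hx : IsAtom x) (hy : IsAtom y) (hxy : ¬ lt x y) (hxP : x ∈ P i) : y ∈ P i := by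
  by_contra hyP
  exact hxy (h_proper x y hx hy ⟨i, hxP, hyP⟩)

theorem atom_ideal_membership_via_greatest_atom_general
    {α J : Type*} [SemilatticeSup α] [OrderBot α] [IsAtomistic α]
    {P : J → Set α} (h_lower : ∀ j, IsLowerSet (P j)) (h_sup : ∀ j, SupClosed (P j))
    {lt : α → α → Prop} (h_proper : IsProperOnAtoms P lt)
    {a b : α} (ha_fin : {c | IsAtom c ∧ c ≤ a}.Finite) (hb_atom : IsAtom b) (hb_le : b ≤ a)
    (hb_max : ∀ c, IsAtom c → c ≤ a → ¬ lt b c) (h : J) :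
    a ∈ P h ↔ b ∈ P h := by
  refine ⟨fun ha => h_lower h hb_le ha, fun hb => ?_⟩
  have h_atoms : {c | IsAtom c ∧ c ≤ a} ⊆ P h := fun c ⟨hc, hca⟩ =>
    h_proper.mem_of_not_lt hb_atom hc (hb_max c hc hca) hb
  exact mem_of_isLUB_of_finite (h_sup h) ha_fin ⟨b, hb_atom, hb_le⟩ h_atoms (isLUB_atoms_le a)

theorem atom_ideal_membership_via_greatest_atom
    {J : Type} [LinearOrder J] {α : Type} [BooleanAlgebra α] [Fintype α]
    (P : J → Set α)
    -- each P j is an ideal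
    (h_not_top : ∀ j, (⊤ : α) ∉ P j)
    (h_lower : ∀ j, ∀ x ∈ P j, ∀ y, y ≤ x → y ∈ P j)
    (h_sup_mem : ∀ j, ∀ x ∈ P j, ∀ y ∈ P j, x ⊔ y ∈ P j)
    -- the family is increasing
    (h_mono : ∀ i j : J, i ≤ j → P i ⊆ P j)
    -- ≺ is an ordering of the atoms of B ...
    (lt : α → α → Prop)
    (h_irrefl : ∀ x, IsAtom x → ¬ lt x x)
    (h_trans : ∀ x y z, IsAtom x → IsAtom y → IsAtom z → lt x y → lt y z → lt x z)
    (h_total : ∀ x y, IsAtom x → IsAtom y → x ≠ y → lt x y ∨ lt y x)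
    -- ... which is proper
    (h_proper : ∀ x y, IsAtom x → IsAtom y → (∃ i, x ∈ P i ∧ y ∉ P i) → lt x y)
    -- A is a Boolean subalgebra of B
    (S : Set α)
    (hS_bot : ⊥ ∈ S) (hS_top : ⊤ ∈ S)
    (hS_sup : ∀ x ∈ S, ∀ y ∈ S, x ⊔ y ∈ S)
    (hS_inf : ∀ x ∈ S, ∀ y ∈ S, x ⊓ y ∈ S)
    (hS_compl : ∀ x ∈ S, xᶜ ∈ S)
    -- a is an atom of the subalgebra A
    (a : α) (haS : a ∈ S) (ha_ne : a ≠ ⊥)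
    (ha_min : ∀ x ∈ S, x ≤ a → x = ⊥ ∨ x = a)
    -- b is the ≺-greatest atom of B lying below a
    (b : α) (hb_atom : IsAtom b) (hb_le : b ≤ a)
    (hb_greatest : ∀ c, IsAtom c → c ≤ a → c ≠ b → lt c b)
    (h : J) :
    a ∈ P h ↔ b ∈ P h := by
  have := isAtomistic_of_finite α
  exact atom_ideal_membership_via_greatest_atom_general
    (fun j x y hyx hx => h_lower j x hx y hyx) (fun j x hx y hy => h_sup_mem j x hx y hy)
    h_proper (Set.toFinite _) hb_atom hb_le
    (fun c hc hca => not_rel_of_ne_imp_rel h_irrefl h_trans hb_atom hc (hb_greatest c hc hca)) h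
end

section
/- The class na(B_J) is hereditary: if (B, (P_j)_{j∈J}, <) belongs to na(B_J) and A is a Boolean subalgebra of B (a subset containing 0 and 1 and closed under ∨, ∧, ¬), then A, equipped with the predicates P_j ∩ A and the restriction of < to A, belongs to na(B_J); in particular the restricted order is a natural ordering of A and A has at least one atom lying in no P_j ∩ A. -/
/-- A finite Boolean algebra with a `J`-indexed family of distinguished subsets
and a distinguished binary relation (the linear ordering). -/
structure OrdAlg (J : Type) [LinearOrder J] : Type 1 where
  carrier : Type
  [ba : BooleanAlgebra carrier]
  [fin : Fintype carrier]
  P : J → Set carrier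
  lt : carrier → carrier → Prop

attribute [instance] OrdAlg.ba OrdAlg.fin

namespace OrdAlg

variable {J : Type} [LinearOrder J]

/-- The predicates form an increasing family of (nontrivial) ideals: this makes
the structure a `J`-algebra. -/
def IdealFam (A : OrdAlg J) : Prop :=
  (∀ j : J, (⊤ : A.carrier) ∉ A.P j) ∧
  (∀ j : J, ∀ x ∈ A.P j, ∀ y : A.carrier, y ≤ x → y ∈ A.P j) ∧
  (∀ j : J, ∀ x ∈ A.P j, ∀ y ∈ A.P j, x ⊔ y ∈ A.P j) ∧
  (∀ i j : J, i ≤ j → A.P i ⊆ A.P j)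

/-- The ordering is proper on atoms: atoms in some ideal `P i` come before atoms not in `P i`. -/
def Proper (A : OrdAlg J) : Prop :=
  ∀ a b : A.carrier, IsAtom a → IsAtom b → (∃ i : J, a ∈ A.P i ∧ b ∉ A.P i) → A.lt a b

/-- The ordering is natural: a strict total (i.e. linear) order whose restriction to the
atoms is proper, and which is the antilexicographical extension of its restriction to atoms:
for distinct `a`, `b`, `a < b` iff the `<`-greatest atom lying below exactly one of `a`, `b`
lies below `b`. -/
def Natural (A : OrdAlg J) : Prop :=
  IsStrictTotalOrder A.carrier A.lt ∧ A.Proper ∧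
  ∀ a b : A.carrier, a ≠ b →
    (A.lt a b ↔ ∃ c : A.carrier, IsAtom c ∧ c ≤ b ∧ ¬ c ≤ a ∧
      ∀ d : A.carrier, IsAtom d → ¬ (d ≤ a ↔ d ≤ b) → d = c ∨ A.lt d c)

/-- Membership in the class `na(B_J)`: a naturally ordered `J`-algebra with at least one
atom lying in no `P j`. -/
def InNaBJ (A : OrdAlg J) : Prop :=
  A.IdealFam ∧ A.Natural ∧ ∃ a : A.carrier, IsAtom a ∧ ∀ j : J, a ∉ A.P j

/-- Membership in the class `na(B_J^u)`: a naturally ordered `J`-algebra in which all atoms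
except exactly one belong to some `P j`. -/
def InNaBJu (A : OrdAlg J) : Prop :=
  A.IdealFam ∧ A.Natural ∧ ∃! a : A.carrier, IsAtom a ∧ ∀ j : J, a ∉ A.P j

/-- An embedding of ordered `J`-algebras: an injective map preserving `⊔`, `⊓`, `ᶜ`,
`⊥`, `⊤`, the linear order and each predicate. -/
structure Emb (A B : OrdAlg J) : Type where
  toFun : A.carrier → B.carrier
  inj : Function.Injective toFun
  map_sup : ∀ x y : A.carrier, toFun (x ⊔ y) = toFun x ⊔ toFun y
  map_inf : ∀ x y : A.carrier, toFun (x ⊓ y) = toFun x ⊓ toFun y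
  map_compl : ∀ x : A.carrier, toFun xᶜ = (toFun x)ᶜ
  map_bot : toFun ⊥ = ⊥
  map_top : toFun ⊤ = ⊤
  map_lt : ∀ x y : A.carrier, A.lt x y ↔ B.lt (toFun x) (toFun y)
  map_P : ∀ (j : J) (x : A.carrier), x ∈ A.P j ↔ toFun x ∈ B.P j

/-- The copies of `A` in `C`: images of embeddings of `A` into `C`. -/
def Copies (A C : OrdAlg J) : Set (Set C.carrier) :=
  {S | ∃ e : Emb A C, Set.range e.toFun = S}

end OrdAlg

/-- A Boolean subalgebra: a subset containing `⊥` and `⊤` and closed under `⊔`, `⊓`, `ᶜ`. -/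
def IsSubalgebraSet {α : Type} [BooleanAlgebra α] (S : Set α) : Prop :=
  ⊥ ∈ S ∧ ⊤ ∈ S ∧ (∀ x ∈ S, ∀ y ∈ S, x ⊔ y ∈ S) ∧
    (∀ x ∈ S, ∀ y ∈ S, x ⊓ y ∈ S) ∧ (∀ x ∈ S, xᶜ ∈ S)

/-- `a` is an atom of the subalgebra `S`: a minimal nonzero element of `S`. -/
def IsAtomIn {α : Type} [BooleanAlgebra α] (S : Set α) (a : α) : Prop :=
  a ∈ S ∧ a ≠ ⊥ ∧ ∀ x ∈ S, x ≤ a → x = ⊥ ∨ x = a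

/-!
Each atom `q` of `B` lies below a unique atom of the subalgebra `S`, and an element of `S` lies
above one of these two exactly when it lies above the other. So the `<`-greatest atom of `B`
separating `a, b ∈ S` lies below an atom `c` of `S` separating them in the same direction; every
other atom `d` of `S` separating them is smaller than `c`, because the greatest atom of `B`
separating `d` from `c` is again the one below `c`.

Properness holds for arbitrary elements, not just for atoms: if `a ∈ P i` and `b ∉ P i`, then some
atom below `b` lies outside the ideal `P i`, hence comes after all atoms below `a`.
-/

section Antilex

variable {α : Type*} [LE α] {r : α → α → Prop} {p : α → Prop} {S : Set α} {a b c d : α}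

/-- The witness for `a < b` in an antilexicographical order: `c` is the `r`-greatest among the
elements satisfying `p` that lie below exactly one of `a` and `b`, and it lies below `b`. -/
def IsTopSeparator (r : α → α → Prop) (p : α → Prop) (a b c : α) : Prop :=
  p c ∧ c ≤ b ∧ ¬ c ≤ a ∧ ∀ d, p d → ¬ (d ≤ a ↔ d ≤ b) → d = c ∨ r d c

/-- On `S`, the relation `r` is the antilexicographical extension of its restriction to the
elements satisfying `p`. The predicate `p` is `IsAtom` for the whole algebra and `IsAtomIn S` for
a subalgebra `S`. -/
def IsAntilexOn (r : α → α → Prop) (p : α → Prop) (S : Set α) : Prop :=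
  ∀ a ∈ S, ∀ b ∈ S, a ≠ b → (r a b ↔ ∃ c, IsTopSeparator r p a b c)

theorem IsTopSeparator.not_swap [Std.Asymm r] (hc : IsTopSeparator r p a b c) :
    ¬ IsTopSeparator r p b a d := by
  rintro ⟨hd, hda, hdb, hd_max⟩
  obtain ⟨hc, hcb, hca, hc_max⟩ := hc
  have hcd : c ≠ d := by
    rintro rfl
    exact hca hda
  have hrdc : r d c := (hc_max d hd (by tauto)).resolve_left hcd.symm
  have hrcd : r c d := (hd_max c hc (by tauto)).resolve_left hcd
  exact Std.Asymm.asymm _ _ hrcd hrdc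

theorem isAntilexOn_of_exists_isTopSeparator [Std.Asymm r] [Std.Trichotomous r]
    (h : ∀ a ∈ S, ∀ b ∈ S, a ≠ b → r a b → ∃ c, IsTopSeparator r p a b c) :
    IsAntilexOn r p S := by
  refine fun a ha b hb hab ↦ ⟨h a ha b hb hab, fun ⟨c, hc⟩ ↦ ?_⟩
  refine (trichotomous_of r a b).resolve_right ?_
  rintro (rfl | hba)
  · exact hab rfl
  · obtain ⟨d, hd⟩ := h b hb a ha hab.symm hba
    exact hc.not_swap hd

end Antilex

theorem isAtomistic_of_isAtomic {α : Type*} [BooleanAlgebra α] [IsAtomic α] : IsAtomistic α where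
  isLUB_atoms b := ⟨{a | IsAtom a ∧ a ≤ b},
    ⟨fun _ h ↦ h.2, fun _ h ↦ BooleanAlgebra.le_iff_atom_le_imp.2 fun _ ha hab ↦ h ⟨ha, hab⟩⟩,
    fun _ h ↦ h.1⟩

section Ideal

variable {α : Type*} {I : Set α} {a b : α}

theorem exists_isAtom_le_notMem_of_supClosed [SemilatticeSup α] [OrderBot α] [IsAtomistic α]
    [Finite α] (hbot : ⊥ ∈ I) (hsup : SupClosed I) (hb : b ∉ I) :
    ∃ q, IsAtom q ∧ q ≤ b ∧ q ∉ I := by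
  by_contra! h
  let atoms : Finset α := (Set.toFinite {q | IsAtom q ∧ q ≤ b}).toFinset
  have hatoms : atoms.sup id = b :=
    Finset.isLUB_sup_id.unique (by simpa [atoms] using isLUB_atoms_le b)
  refine hb (hatoms ▸ Finset.sup_mem I hbot (fun x hx y hy ↦ hsup hx hy) atoms id ?_)
  intro q hq
  obtain ⟨hq_atom, hqb⟩ : IsAtom q ∧ q ≤ b := by simpa [atoms] using hq
  exact h q hq_atom hqb

theorem IsAntilexOn.rel_of_mem_of_notMem [SemilatticeSup α] [OrderBot α] [IsAtomistic α]
    [Finite α] {r : α → α → Prop} [Std.Asymm r] [Std.Trichotomous r]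
    (hr : IsAntilexOn r IsAtom Set.univ) (hlower : IsLowerSet I) (hsup : SupClosed I)
    (hproper : ∀ c q, IsAtom c → IsAtom q → c ∈ I → q ∉ I → r c q) (ha : a ∈ I) (hb : b ∉ I) :
    r a b := by
  obtain ⟨q, hq, hqb, hqI⟩ := exists_isAtom_le_notMem_of_supClosed (hlower bot_le ha) hsup hb
  have hab : a ≠ b := ne_of_mem_of_not_mem ha hb
  obtain hrab | hab' | hrba := trichotomous_of r a b
  · exact hrab
  · exact absurd hab' hab
  · obtain ⟨c, hc, hca, -, hc_max⟩ := (hr b trivial a trivial hab.symm).1 hrba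
    have hcI : c ∈ I := hlower hca ha
    have hqa : ¬ q ≤ a := fun hqa ↦ hqI (hlower hqa ha)
    obtain rfl | hrqc := hc_max q hq (by tauto)
    · exact absurd hcI hqI
    · exact absurd hrqc (Std.Asymm.asymm _ _ (hproper c q hc hq hcI hqI))

end Ideal

section Subalgebra

variable {α : Type} [BooleanAlgebra α] {r : α → α → Prop} {S : Set α} {a b c q x : α}

theorem IsAtomIn.le_iff_le_of_le (hc : IsAtomIn S c) (hS : IsSubalgebraSet S) (hq : q ≠ ⊥)
    (hqc : q ≤ c) (hx : x ∈ S) : q ≤ x ↔ c ≤ x := by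
  refine ⟨fun hqx ↦ ?_, hqc.trans⟩
  obtain ⟨hcS, -, hmin⟩ := hc
  obtain ⟨-, -, -, hinf, -⟩ := hS
  obtain hbot | hcx := hmin (c ⊓ x) (hinf c hcS x hx) inf_le_left
  · exact absurd (le_bot_iff.1 (hbot ▸ le_inf hqc hqx)) hq
  · exact inf_eq_left.1 hcx

theorem IsSubalgebraSet.exists_isAtomIn_ge (hS : IsSubalgebraSet S) (hfin : S.Finite)
    (hq : IsAtom q) : ∃ c, IsAtomIn S c ∧ q ≤ c := by
  obtain ⟨-, htop, -, hinf, hcompl⟩ := hS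
  obtain ⟨c, ⟨hcS, hqc⟩, hmin⟩ :=
    (hfin.subset (Set.sep_subset S (q ≤ ·))).exists_minimal ⟨⊤, htop, le_top⟩
  refine ⟨c, ⟨hcS, ne_bot_of_le_ne_bot hq.1 hqc, fun x hx hxc ↦ ?_⟩, hqc⟩
  by_cases hqx : q ≤ x
  · exact Or.inr (hxc.antisymm (hmin ⟨hx, hqx⟩ hxc))
  · have hqx' : q ≤ xᶜ := (hq.not_le_iff_disjoint.1 hqx).le_compl_right
    have hcx' : c ≤ c ⊓ xᶜ :=
      hmin ⟨hinf c hcS _ (hcompl x hx), le_inf hqc hqx'⟩ inf_le_left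
    exact Or.inl (le_compl_self.1 (hxc.trans (hcx'.trans inf_le_right)))

theorem IsTopSeparator.isAtomIn_of_le (hq : IsTopSeparator r IsAtom a b q)
    (hr : IsAntilexOn r IsAtom Set.univ) (hS : IsSubalgebraSet S) (ha : a ∈ S) (hb : b ∈ S)
    (hc : IsAtomIn S c) (hqc : q ≤ c) : IsTopSeparator r (IsAtomIn S) a b c := by
  obtain ⟨hq, hqb, hqa, hq_max⟩ := hq
  have hcb : c ≤ b := (hc.le_iff_le_of_le hS hq.1 hqc hb).1 hqb
  have hca : ¬ c ≤ a := mt hqc.trans hqa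
  refine ⟨hc, hcb, hca, fun d hd hd_sep ↦ or_iff_not_imp_left.2 fun hdc ↦ ?_⟩
  have hqd : ¬ q ≤ d := fun hqd ↦
    have hcd : c ≤ d := (hc.le_iff_le_of_le hS hq.1 hqc hd.1).1 hqd
    (hd.2.2 c hc.1 hcd).elim hc.2.1 (hdc ·.symm)
  have sep_of_le : ∀ s e, IsAtomIn S s → ¬ (s ≤ a ↔ s ≤ b) → IsAtom e → e ≤ s →
      ¬ (e ≤ a ↔ e ≤ b) := fun s e hs hs_sep he hes ↦ by
    rwa [hs.le_iff_le_of_le hS he.1 hes ha, hs.le_iff_le_of_le hS he.1 hes hb]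
  refine (hr d trivial c trivial hdc).2 ⟨q, hq, hqc, hqd, fun e he he_sep ↦ hq_max e he ?_⟩
  by_cases hed : e ≤ d
  · exact sep_of_le d e hd hd_sep he hed
  · exact sep_of_le c e hc (by tauto) he (by tauto)

theorem IsAntilexOn.isAtomIn [Std.Asymm r] [Std.Trichotomous r]
    (hr : IsAntilexOn r IsAtom Set.univ) (hS : IsSubalgebraSet S) (hfin : S.Finite) :
    IsAntilexOn r (IsAtomIn S) S := by
  refine isAntilexOn_of_exists_isTopSeparator fun a ha b hb hab hrab ↦ ?_
  obtain ⟨q, hq⟩ := (hr a trivial b trivial hab).1 hrab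
  obtain ⟨c, hc, hqc⟩ := hS.exists_isAtomIn_ge hfin hq.1
  exact ⟨c, hq.isAtomIn_of_le hr hS ha hb hc hqc⟩

end Subalgebra

/-!
STATEMENT 1: The class na(B_J) is hereditary: if (B, (P_j), <) belongs to na(B_J) and A is a
Boolean subalgebra of B, then A, with the predicates P_j ∩ A and the restriction of < to A,
belongs to na(B_J): the predicates form an increasing family of ideals of A, the restricted
order is a natural ordering of A, and A has at least one atom lying in no P_j ∩ A.
-/

theorem naBJ_hereditary {J : Type} [LinearOrder J]
    (B : OrdAlg J) (hB : B.InNaBJ)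
    (S : Set B.carrier) (hS : IsSubalgebraSet S) :
    -- (1) the predicates (P_j ∩ S) form an increasing family of ideals of the subalgebra S
    ((∀ j : J, (⊤ : B.carrier) ∉ B.P j ∩ S) ∧
     (∀ j : J, ∀ x ∈ B.P j ∩ S, ∀ y ∈ S, y ≤ x → y ∈ B.P j ∩ S) ∧
     (∀ j : J, ∀ x ∈ B.P j ∩ S, ∀ y ∈ B.P j ∩ S, x ⊔ y ∈ B.P j ∩ S) ∧
     (∀ i j : J, i ≤ j → B.P i ∩ S ⊆ B.P j ∩ S)) ∧
    -- (2) the restriction of the order to S is a natural ordering of S: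
    -- (2a) it is proper on the atoms of S
    (∀ a b : B.carrier, IsAtomIn S a → IsAtomIn S b →
      (∃ i : J, a ∈ B.P i ∩ S ∧ b ∉ B.P i ∩ S) → B.lt a b) ∧
    -- (2b) it is the antilexicographical extension of its restriction to the atoms of S
    (∀ a ∈ S, ∀ b ∈ S, a ≠ b →
      (B.lt a b ↔ ∃ c : B.carrier, IsAtomIn S c ∧ c ≤ b ∧ ¬ c ≤ a ∧
        ∀ d : B.carrier, IsAtomIn S d → ¬ (d ≤ a ↔ d ≤ b) → d = c ∨ B.lt d c)) ∧
    -- (3) S has at least one atom lying in no P_j ∩ S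
    (∃ a : B.carrier, IsAtomIn S a ∧ ∀ j : J, a ∉ B.P j ∩ S) := by
  obtain ⟨⟨htop, hlower, hsup, hmono⟩, ⟨hlt, hproper, hlex⟩, ⟨q, hq, hqP⟩⟩ := hB
  have := isAtomistic_of_isAtomic (α := B.carrier)
  have hantilex : IsAntilexOn B.lt IsAtom Set.univ := fun a _ b _ ↦ hlex a b
  refine ⟨⟨fun j h ↦ htop j h.1, fun j x hx y hy hyx ↦ ⟨hlower j x hx.1 y hyx, hy⟩,
    fun j x hx y hy ↦ ⟨hsup j x hx.1 y hy.1, hS.2.2.1 x hx.2 y hy.2⟩,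
    fun i j hij ↦ Set.inter_subset_inter_left S (hmono i j hij)⟩, ?_,
    hantilex.isAtomIn hS S.toFinite, ?_⟩
  · rintro a b - hb ⟨i, ⟨ha, -⟩, hbP⟩
    exact hantilex.rel_of_mem_of_notMem (fun x y hyx hx ↦ hlower i x hx y hyx)
      (fun x hx y hy ↦ hsup i x hx y hy) (fun c q hc hq hcP hqP ↦ hproper c q hc hq ⟨i, hcP, hqP⟩)
      ha (fun h ↦ hbP ⟨h, hb.1⟩)
  · obtain ⟨c, hc, hqc⟩ := hS.exists_isAtomIn_ge S.toFinite hq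
    exact ⟨c, hc, fun j h ↦ hqP j (hlower j c h.1 q hqc)⟩
end

section
/- The class na(B_J) has the amalgamation property: if (A, <_A), (B, <_B), (C, <_C) are structures in na(B_J) and f : (A, <_A) → (B, <_B) and g : (A, <_A) → (C, <_C) are embeddings, then there exist a structure (D, <_D) in na(B_J) and embeddings r : (B, <_B) → (D, <_D) and s : (C, <_C) → (D, <_D) with r ∘ f = s ∘ g. -/
/-!
STATEMENT 4: The class na(B_J) has the amalgamation property.
-/

/-! In the algebra on a finite chain of atoms the natural order is Mathlib's colexicographic order,
and membership in the ideals is recorded by a monotone level function on the chain. An embedding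
dualizes to a surjection of the atom chains, together with the section picking the greatest atom of
each fibre; this section is strictly increasing (the surjection is rigid, as in the dual Ramsey
theorem) and preserves levels. Given two rigid surjections onto the same chain, first amalgamate
the two sections into a common chain `W`, then order the fibre product lexicographically by the
minimum of the two positions in `W` and then by the pair itself: both projections are rigid. -/

section Rigid

universe u v w x y

variable {X : Type u} {Y : Type v} {Z : Type w} {L : Type x} {V W : Type y}

/-- `m` chooses the greatest element of each fibre of `φ`, and is strictly increasing: `φ` is a
rigid surjection (with respect to the reversed orders, in the usual convention). -/
structure IsRigidSection [Preorder X] [Preorder Y] (φ : Y → X) (m : X → Y) : Prop where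
  strictMono : StrictMono m
  leftInverse : Function.LeftInverse φ m
  le_apply : ∀ y, y ≤ m (φ y)

open Finset Finset.Colex in
theorem toColex_lt_toColex_iff_exists_forall_le [LinearOrder X] {s t : Finset X} :
    toColex s < toColex t ↔ ∃ c ∈ t, c ∉ s ∧ ∀ d, ¬(d ∈ s ↔ d ∈ t) → d ≤ c := by
  constructor
  · intro h
    obtain ⟨hne, hmax⟩ := toColex_lt_toColex_iff_max'_mem.1 h
    have hmem := max'_mem _ (symmDiff_nonempty.2 hne)
    refine ⟨_, hmax, fun hs => ?_, fun d hd => le_max' _ _ ?_⟩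
    · simp [mem_symmDiff, hs, hmax] at hmem
    · rw [mem_symmDiff]
      tauto
  · rintro ⟨c, hct, hcs, hle⟩
    exact toColex_lt_toColex_iff_exists_forall_lt.2 ⟨c, hct, hcs, fun b hbs hbt =>
      (hle b fun hb => hbt (hb.1 hbs)).lt_of_ne fun hbc => hcs (hbc ▸ hbs)⟩

theorem IsRigidSection.toColex_filter_lt_iff [LinearOrder X] [LinearOrder Y] [Fintype Y]
    {φ : Y → X} {m : X → Y} (h : IsRigidSection φ m) {s t : Finset X} :
    toColex ({y | φ y ∈ s} : Finset Y) < toColex ({y | φ y ∈ t} : Finset Y) ↔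
      toColex s < toColex t := by
  have hmono : StrictMono fun s : Colex (Finset X) =>
      toColex ({y | φ y ∈ ofColex s} : Finset Y) := by
    intro s t hst
    obtain ⟨c, hct, hcs, hle⟩ :=
      (toColex_lt_toColex_iff_exists_forall_le (s := ofColex s) (t := ofColex t)).1 hst
    refine toColex_lt_toColex_iff_exists_forall_le.2 ⟨m c, ?_, ?_, fun y hy => ?_⟩
    · simpa only [Finset.mem_filter_univ, h.leftInverse c] using hct
    · simpa only [Finset.mem_filter_univ, h.leftInverse c] using hcs
    · have hyc : φ y ≤ c := hle _ (by simpa only [Finset.mem_filter_univ] using hy)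
      exact (h.le_apply y).trans (h.strictMono.monotone hyc)
  exact hmono.lt_iff_lt (a := toColex s) (b := toColex t)

open Classical in
/-- The position of `y` in the amalgam of chains extending `X` along monotone maps such as `m`:
first its level `l y`, then its cut in `X`, and then a tie-breaker `e y`. Points of the range of `m`
receive `⊥` as a tie-breaker, so that they come first in their cut and do not depend on `e`. -/
noncomputable def amalgamPosition [Preorder X] [Preorder Y] (l : Y → L) {m : X → Y}
    (hm : Monotone m) (e : Y → V) (y : Y) : L ×ₗ LowerSet X ×ₗ WithBot V :=
  toLex (l y, toLex (⟨{x | m x ≤ y}, fun _ _ hba ha => (hm hba).trans ha⟩,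
    if y ∈ Set.range m then ⊥ else e y))

theorem amalgamPosition_apply [LinearOrder X] [Preorder Y] (l : Y → L) {m : X → Y}
    (hm : StrictMono m) (e : Y → V) (x : X) :
    amalgamPosition l hm.monotone e (m x) = toLex (l (m x), toLex (LowerSet.Iic x, ⊥)) := by
  have hcut : {x' | m x' ≤ m x} = Set.Iic x := Set.ext fun _ => hm.le_iff_le
  simp only [amalgamPosition, hcut, Set.mem_range_self, if_true]
  rfl

theorem amalgamPosition_strictMono [Preorder X] [Preorder Y] [PartialOrder L] [Preorder V]
    {l : Y → L} (hl : Monotone l) {m : X → Y} (hm : Monotone m) {e : Y → V} (he : StrictMono e) :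
    StrictMono (amalgamPosition l hm e) := by
  intro y y' hy
  refine Prod.Lex.toLex_lt_toLex'.2 ⟨hl hy.le, fun _ => Prod.Lex.toLex_lt_toLex'.2
    ⟨fun _ hx => le_trans hx hy.le, fun hcut => ?_⟩⟩
  have hy' : y' ∉ Set.range m := by
    rintro ⟨x, rfl⟩
    have hx : m x ≤ y := (SetLike.ext_iff.1 hcut x).2 (le_refl (m x))
    exact hx.not_gt hy
  simp only [hy', if_false]
  split_ifs
  · exact WithBot.bot_lt_coe _
  · exact WithBot.coe_lt_coe.2 (he hy)

theorem exists_strictMono_amalgam [LinearOrder X] [LinearOrder Y] [LinearOrder Z]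
    [LinearOrder L] {lY : Y → L} {lZ : Z → L} (hlY : Monotone lY) (hlZ : Monotone lZ)
    {m : X → Y} {n : X → Z} (hm : StrictMono m) (hn : StrictMono n) (hl : lY ∘ m = lZ ∘ n) :
    ∃ (W : Type (max u v w x)) (_ : LinearOrder W) (j : Y → W) (k : Z → W) (u : W → L),
      StrictMono j ∧ StrictMono k ∧ Monotone u ∧ j ∘ m = k ∘ n ∧ u ∘ j = lY ∧ u ∘ k = lZ := by
  refine ⟨L ×ₗ LowerSet X ×ₗ WithBot (Y ⊕ₗ Z), inferInstance,
    amalgamPosition lY hm.monotone (toLex ∘ Sum.inl),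
    amalgamPosition lZ hn.monotone (toLex ∘ Sum.inr), fun w => (ofLex w).1,
    amalgamPosition_strictMono hlY hm.monotone Sum.Lex.inl_strictMono,
    amalgamPosition_strictMono hlZ hn.monotone Sum.Lex.inr_strictMono,
    Prod.Lex.monotone_fst_ofLex, funext fun x => ?_, rfl, rfl⟩
  have hlx : lY (m x) = lZ (n x) := congrFun hl x
  rw [Function.comp_apply, Function.comp_apply, amalgamPosition_apply lY hm,
    amalgamPosition_apply lZ hn, hlx]

namespace IsRigidSection

/-- The position of a pair in the linear order on the fibre product of two chains mapped to a common
chain by `j` and `k`. The pair itself is the last coordinate, which makes the position injective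
while keeping it monotone for the product order. -/
def pullbackKey [LinearOrder W] (j : Y → W) (k : Z → W) (p : Y × Z) : W ×ₗ Y ×ₗ Z :=
  toLex (min (j p.1) (k p.2), toLex p)

theorem pullbackKey_monotone [LinearOrder W] [PartialOrder Y] [Preorder Z] {j : Y → W} {k : Z → W}
    (hj : Monotone j) (hk : Monotone k) : Monotone (pullbackKey j k) := fun _ _ h =>
  Prod.Lex.toLex_mono ⟨min_le_min (hj h.1) (hk h.2), Prod.Lex.toLex_mono h⟩

variable [LinearOrder Y] [LinearOrder Z] {φ : Y → X} {ψ : Z → X} {m : X → Y} {n : X → Z}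

theorem exists_pullback [Preorder X] [LinearOrder W] [Finite Y] [Finite Z] (hφ : IsRigidSection φ m)
    (hψ : IsRigidSection ψ n) {j : Y → W} {k : Z → W} (hj : StrictMono j) (hk : StrictMono k)
    (hjk : j ∘ m = k ∘ n) :
    ∃ (D : Type (max v w y)) (_ : LinearOrder D) (_ : Fintype D) (ρ : D → Y) (i : Y → D)
      (σ : D → Z) (t : Z → D) (u : D → W), IsRigidSection ρ i ∧ IsRigidSection σ t ∧ Monotone u ∧
        u ∘ i = j ∧ u ∘ t = k ∧ φ ∘ ρ = ψ ∘ σ := by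
  let D : Set (W ×ₗ Y ×ₗ Z) := pullbackKey j k '' {p | φ p.1 = ψ p.2}
  have hjk' (x) : j (m x) = k (n x) := congrFun hjk x
  have hmin_left (y) : min (j y) (k (n (φ y))) = j y :=
    min_eq_left (hjk' _ ▸ hj.monotone (hφ.le_apply y))
  have hmin_right (z) : min (j (m (ψ z))) (k z) = k z :=
    min_eq_right (hjk' _ ▸ hk.monotone (hψ.le_apply z))
  let i (y : Y) : D := ⟨_, (y, n (φ y)), (hψ.leftInverse _).symm, rfl⟩
  let t (z : Z) : D := ⟨_, (m (ψ z), z), hφ.leftInverse _, rfl⟩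
  let u (d : D) : W := (ofLex d.1).1
  have hu : Monotone u := fun _ _ h => Prod.Lex.monotone_fst_ofLex h
  have hui : u ∘ i = j := funext hmin_left
  have hut : u ∘ t = k := funext hmin_right
  refine ⟨D, inferInstance, (Set.toFinite D).fintype, fun d => (ofLex (ofLex d.1).2).1, i,
    fun d => (ofLex (ofLex d.1).2).2, t, u, ⟨?_, fun _ => rfl, ?_⟩, ⟨?_, fun _ => rfl, ?_⟩, hu,
    hui, hut, ?_⟩
  · exact fun y y' h => hu.reflect_lt <|
      (hmin_left y).trans_lt ((hj h).trans_eq (hmin_left y').symm)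
  · rintro ⟨_, ⟨y, z⟩, hyz : φ y = ψ z, rfl⟩
    exact pullbackKey_monotone hj.monotone hk.monotone ⟨le_rfl, hyz ▸ hψ.le_apply z⟩
  · exact fun z z' h => hu.reflect_lt <|
      (hmin_right z).trans_lt ((hk h).trans_eq (hmin_right z').symm)
  · rintro ⟨_, ⟨y, z⟩, hyz : φ y = ψ z, rfl⟩
    exact pullbackKey_monotone hj.monotone hk.monotone ⟨hyz ▸ hφ.le_apply y, le_rfl⟩
  · funext ⟨_, ⟨y, z⟩, hyz, rfl⟩
    exact hyz

theorem exists_amalgam [LinearOrder X] [LinearOrder L] [Finite Y] [Finite Z]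
    (hφ : IsRigidSection φ m) (hψ : IsRigidSection ψ n) {lY : Y → L} {lZ : Z → L}
    (hlY : Monotone lY) (hlZ : Monotone lZ) (hl : lY ∘ m = lZ ∘ n) :
    ∃ (D : Type (max u v w x)) (_ : LinearOrder D) (_ : Fintype D) (ρ : D → Y) (i : Y → D)
      (σ : D → Z) (t : Z → D) (U : D → L), IsRigidSection ρ i ∧ IsRigidSection σ t ∧ Monotone U ∧
        (∀ y, U (i y) = lY y) ∧ (∀ z, U (t z) = lZ z) ∧ ∀ d, φ (ρ d) = ψ (σ d) := by
  obtain ⟨W, _, j, k, v, hj, hk, hv, hjk, hvj, hvk⟩ :=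
    exists_strictMono_amalgam hlY hlZ hφ.strictMono hψ.strictMono hl
  obtain ⟨D, _, _, ρ, i, σ, t, u, hρ, hσ, hu, rfl, rfl, hcomm⟩ := hφ.exists_pullback hψ hj hk hjk
  exact ⟨D, inferInstance, inferInstance, ρ, i, σ, t, v ∘ u, hρ, hσ, hv.comp hu, congrFun hvj,
    congrFun hvk, congrFun hcomm⟩

end IsRigidSection

end Rigid

theorem isAtom_le_sup_iff {α : Type*} [DistribLattice α] [OrderBot α] {a : α} (ha : IsAtom a)
    {x y : α} : a ≤ x ⊔ y ↔ a ≤ x ∨ a ≤ y :=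
  not_iff_not.1 <| by simp only [not_or, ha.not_le_iff_disjoint, disjoint_sup_right]

theorem exists_isAtom_forall_le_map_iff {α β : Type*} [BooleanAlgebra α] [Finite α]
    [DistribLattice β] [BoundedOrder β] (f : BoundedLatticeHom α β) {b : β} (hb : IsAtom b) :
    ∃ a, IsAtom a ∧ ∀ x, b ≤ f x ↔ a ≤ x := by
  classical
  have := Fintype.ofFinite α
  let a : α := Finset.inf {x | b ≤ f x} id
  have hba : b ≤ f a := by
    rw [map_finset_inf]
    exact Finset.le_inf fun x hx => (Finset.mem_filter.1 hx).2
  have hiff (x : α) : b ≤ f x ↔ a ≤ x :=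
    ⟨fun hx => Finset.inf_le (f := id) (by simpa using hx),
      fun hx => hba.trans (OrderHomClass.mono f hx)⟩
  refine ⟨a, ⟨fun ha => hb.ne_bot ?_, fun y hy => ?_⟩, hiff⟩
  · simpa [ha] using hba
  · have hyc : a ≤ y ∨ a ≤ yᶜ := by
      rw [← hiff, ← hiff, ← isAtom_le_sup_iff hb, ← map_sup, sup_compl_eq_top, map_top]
      exact le_top
    exact le_compl_self.1 (hy.le.trans (hyc.resolve_left hy.not_ge))

namespace OrdAlg

variable {J : Type} [LinearOrder J] {A B : OrdAlg J}

namespace IdealFam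

/-- The level of an element: the set of indices of the ideals containing it. Upper sets are ordered
by reverse inclusion, which makes `level` monotone. -/
def level (hA : A.IdealFam) (x : A.carrier) : UpperSet J :=
  ⟨{j | x ∈ A.P j}, fun _ _ hij hx => hA.2.2.2 _ _ hij hx⟩

theorem mem_level {hA : A.IdealFam} {x : A.carrier} {j : J} : j ∈ hA.level x ↔ x ∈ A.P j := Iff.rfl

theorem level_mono (hA : A.IdealFam) : Monotone hA.level := fun _ _ hxy _ hy =>
  hA.2.1 _ _ hy _ hxy

theorem mem_P_iff_forall_isAtom (hA : A.IdealFam) {j : J} {x : A.carrier} :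
    x ∈ A.P j ↔ ⊥ ∈ A.P j ∧ ∀ a, IsAtom a → a ≤ x → a ∈ A.P j := by
  classical
  refine ⟨fun hx => ⟨hA.2.1 j x hx _ bot_le, fun a _ hax => hA.2.1 j x hx a hax⟩, ?_⟩
  rintro ⟨hbot, hatoms⟩
  let S : Finset A.carrier := {a | IsAtom a ∧ a ≤ x}
  have hS : S.sup id ∈ A.P j := Finset.sup_mem (A.P j) hbot (hA.2.2.1 j) S id fun a ha =>
    hatoms a (Finset.mem_filter.1 ha).2.1 (Finset.mem_filter.1 ha).2.2
  exact hA.2.1 j _ hS x <| BooleanAlgebra.le_iff_atom_le_imp.2 fun a ha hax =>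
    Finset.le_sup (f := id) (by simpa [S] using ⟨ha, hax⟩)

end IdealFam

namespace Natural

/-- The atoms of a naturally ordered algebra, as a chain. The ordering hypothesis is a parameter of
the type so that the linear order below can be an instance. -/
@[ext]
structure Atoms (hA : A.Natural) : Type where
  val : A.carrier
  isAtom : IsAtom val

noncomputable instance (hA : A.Natural) : Fintype hA.Atoms :=
  @Fintype.ofFinite _ (Finite.of_injective Atoms.val fun _ _ => Atoms.ext)

open Classical in
noncomputable instance (hA : A.Natural) : LinearOrder hA.Atoms :=
  haveI := hA.1
  haveI : IsStrictTotalOrder hA.Atoms (InvImage A.lt Atoms.val) :=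
    { toTrichotomous := InvImage.trichotomous fun _ _ => Atoms.ext }
  linearOrderOfSTO (InvImage A.lt Atoms.val)

open Classical in
/-- The finite set of atoms below `x`, through which an element is represented. -/
noncomputable def atomsBelow (hA : A.Natural) (x : A.carrier) : Finset hA.Atoms :=
  {a | a.val ≤ x}

@[simp]
theorem mem_atomsBelow {hA : A.Natural} {x : A.carrier} {a : hA.Atoms} :
    a ∈ hA.atomsBelow x ↔ a.val ≤ x := by
  simp [atomsBelow]

theorem atomsBelow_injective (hA : A.Natural) : Function.Injective hA.atomsBelow := fun x y h =>
  BooleanAlgebra.eq_iff_atom_le_iff.2 fun a ha => by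
    simpa using Finset.ext_iff.1 h ⟨a, ha⟩

/-- The homomorphism to the algebra of subsets of `X` dual to a map from `X` to the atoms. -/
noncomputable def preimageAtomsBelow (hA : A.Natural) {X : Type*} [Fintype X] [DecidableEq X]
    (ρ : X → hA.Atoms) : BoundedLatticeHom A.carrier (Finset X) where
  toFun a := {x | ρ x ∈ hA.atomsBelow a}
  map_sup' a b := by ext x; simp [isAtom_le_sup_iff (ρ x).isAtom]
  map_inf' a b := by ext x; simp
  map_top' := by ext x; simp
  map_bot' := by ext x; simp [(ρ x).isAtom.ne_bot]

@[simp]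
theorem mem_preimageAtomsBelow {hA : A.Natural} {X : Type*} [Fintype X] [DecidableEq X]
    {ρ : X → hA.Atoms} {a : A.carrier} {x : X} :
    x ∈ hA.preimageAtomsBelow ρ a ↔ (ρ x).val ≤ a := by
  simp [preimageAtomsBelow]

theorem lt_iff_toColex_lt (hA : A.Natural) {x y : A.carrier} :
    A.lt x y ↔ toColex (hA.atomsBelow x) < toColex (hA.atomsBelow y) := by
  rcases eq_or_ne x y with rfl | hxy
  · exact iff_of_false (hA.1.irrefl x) (lt_irrefl _)
  rw [hA.2.2 x y hxy, toColex_lt_toColex_iff_exists_forall_le]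
  simp only [mem_atomsBelow]
  constructor
  · rintro ⟨c, hc, hcy, hcx, hmax⟩
    exact ⟨⟨c, hc⟩, hcy, hcx, fun d hd =>
      (hmax d.val d.isAtom hd).elim (fun h => (Atoms.ext h).le) fun h =>
        le_of_lt (show d < ⟨c, hc⟩ from h)⟩
  · rintro ⟨c, hcy, hcx, hmax⟩
    exact ⟨c.val, c.isAtom, hcy, hcx, fun d hd hdxy =>
      (hmax ⟨d, hd⟩ hdxy).eq_or_lt.imp_left (congrArg Atoms.val)⟩

theorem monotone_level_val (hA : A.Natural) (hI : A.IdealFam) :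
    Monotone fun a : hA.Atoms => hI.level a.val := by
  intro a b hab j hj
  by_contra ha
  exact hab.not_gt (hA.2.1 b.val a.val b.isAtom a.isAtom ⟨j, hj, ha⟩)

theorem exists_isGreatest_atomsBelow (hA : A.Natural) {x : A.carrier} (hx : x ≠ ⊥) :
    ∃ a, IsGreatest (hA.atomsBelow x : Set hA.Atoms) a := by
  obtain ⟨a, ha, hax⟩ := (IsAtomic.eq_bot_or_exists_atom_le x).resolve_left hx
  have hne : (hA.atomsBelow x).Nonempty := ⟨⟨a, ha⟩, mem_atomsBelow.2 hax⟩
  exact ⟨_, Finset.isGreatest_max' _ hne⟩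

theorem level_eq_of_isGreatest (hA : A.Natural) (hI : A.IdealFam) {x : A.carrier} {a : hA.Atoms}
    (ha : IsGreatest (hA.atomsBelow x : Set hA.Atoms) a) : hI.level x = hI.level a.val := by
  refine le_antisymm (fun j hj => ?_) (hI.level_mono (mem_atomsBelow.1 ha.1))
  refine hI.mem_P_iff_forall_isAtom.2 ⟨hI.level_mono bot_le hj, fun b hb hbx => ?_⟩
  have hba : (⟨b, hb⟩ : hA.Atoms) ≤ a := ha.2 (Finset.mem_coe.2 (mem_atomsBelow.2 hbx))
  exact hA.monotone_level_val hI hba hj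

end Natural

section OfChain

variable {X : Type} [LinearOrder X] [Fintype X]

/-- The algebra of subsets of a finite chain with a level function `U`, in its colexicographic
order. The ideals of a `J`-algebra are allowed to be empty; `N` is the set of indices of the
nonempty ones. -/
def ofChain (U : X → UpperSet J) (N : UpperSet J) : OrdAlg J where
  carrier := Finset X
  P j := {s | j ∈ N ∧ ∀ x ∈ s, j ∈ U x}
  lt s t := toColex s < toColex t

variable {U : X → UpperSet J} {N : UpperSet J}

theorem ofChain_idealFam (hU : ∀ j, ∃ x, j ∉ U x) : (ofChain U N).IdealFam := by
  refine ⟨fun j hj => ?_, fun j s hs t hts => ⟨hs.1, fun x hx => hs.2 x (hts hx)⟩,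
    fun j s hs t ht => ⟨hs.1, fun x hx => (Finset.mem_union.1 hx).elim (hs.2 x) (ht.2 x)⟩,
    fun i j hij s hs => ⟨N.upper hij hs.1, fun x hx => (U x).upper hij (hs.2 x hx)⟩⟩
  obtain ⟨x, hx⟩ := hU j
  exact hx (hj.2 x (Finset.mem_univ x))

theorem ofChain_isAtom_iff {s : (ofChain U N).carrier} :
    IsAtom s ↔ ∃ x : X, s = ({x} : Finset X) :=
  Finset.isAtom_iff

theorem ofChain_proper (hU : Monotone U) : (ofChain U N).Proper := by
  rintro s t hs ht ⟨j, hjs, hjt⟩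
  obtain ⟨x, rfl⟩ := ofChain_isAtom_iff.1 hs
  obtain ⟨y, rfl⟩ := ofChain_isAtom_iff.1 ht
  refine Finset.Colex.singleton_lt_singleton.2 (lt_of_not_ge fun hyx => hjt ⟨hjs.1, fun z hz => ?_⟩)
  rw [Finset.mem_singleton.1 hz]
  exact hU hyx (hjs.2 x (Finset.mem_singleton_self x))

theorem ofChain_natural (hU : Monotone U) : (ofChain U N).Natural := by
  refine ⟨inferInstanceAs (IsStrictTotalOrder (Colex (Finset X)) (· < ·)), ofChain_proper hU,
    fun s t _ => toColex_lt_toColex_iff_exists_forall_le.trans ⟨?_, ?_⟩⟩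
  · rintro ⟨c, hct, hcs, hmax⟩
    refine ⟨({c} : Finset X), ofChain_isAtom_iff.2 ⟨c, rfl⟩, Finset.singleton_subset_iff.2 hct,
      fun h => hcs (Finset.singleton_subset_iff.1 h), fun d hd hdst => ?_⟩
    obtain ⟨x, rfl⟩ := ofChain_isAtom_iff.1 hd
    have hxc : x ≤ c := hmax x fun h => hdst <|
      Finset.singleton_subset_iff.trans (h.trans Finset.singleton_subset_iff.symm)
    exact hxc.eq_or_lt.imp (congrArg _) Finset.Colex.singleton_lt_singleton.2
  · rintro ⟨c, hc, hct, hcs, hmax⟩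
    obtain ⟨x, rfl⟩ := ofChain_isAtom_iff.1 hc
    refine ⟨x, Finset.singleton_subset_iff.1 hct, fun h => hcs (Finset.singleton_subset_iff.2 h),
      fun d hd => ?_⟩
    have hdst : ¬(({d} : Finset X) ⊆ s ↔ ({d} : Finset X) ⊆ t) := fun h => hd <|
      Finset.singleton_subset_iff.symm.trans (h.trans Finset.singleton_subset_iff)
    rcases hmax _ (ofChain_isAtom_iff.2 ⟨d, rfl⟩) hdst with h | h
    · exact (Finset.singleton_injective h).le
    · exact (Finset.Colex.singleton_lt_singleton.1 h).le

theorem ofChain_inNaBJ (hU : Monotone U) {x : X} (hx : ∀ j, j ∉ U x) : (ofChain U N).InNaBJ :=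
  ⟨ofChain_idealFam fun j => ⟨x, hx j⟩, ofChain_natural hU, ({x} : Finset X),
    ofChain_isAtom_iff.2 ⟨x, rfl⟩, fun j hj => hx j (hj.2 x (Finset.mem_singleton_self x))⟩

end OfChain

namespace Emb

/-- An embedding, viewed as a homomorphism of bounded lattices. -/
def toBoundedLatticeHom (f : Emb A B) : BoundedLatticeHom A.carrier B.carrier where
  toFun := f.toFun
  map_sup' := f.map_sup
  map_inf' := f.map_inf
  map_top' := f.map_top
  map_bot' := f.map_bot

theorem level_map (f : Emb A B) (hA : A.IdealFam) (hB : B.IdealFam) (x : A.carrier) :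
    hB.level (f.toFun x) = hA.level x :=
  SetLike.ext fun j => (f.map_P j x).symm

theorem exists_isRigidSection (f : Emb A B) (hA : A.Natural) (hB : B.Natural) (hAI : A.IdealFam)
    (hBI : B.IdealFam) :
    ∃ (φ : hB.Atoms → hA.Atoms) (m : hA.Atoms → hB.Atoms), IsRigidSection φ m ∧
      (∀ a, hBI.level (m a).val = hAI.level a.val) ∧
      ∀ b x, b.val ≤ f.toFun x ↔ (φ b).val ≤ x := by
  have hexφ (b : hB.Atoms) : ∃ a : hA.Atoms, ∀ x, b.val ≤ f.toFun x ↔ a.val ≤ x :=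
    let ⟨a, ha, h⟩ := exists_isAtom_forall_le_map_iff f.toBoundedLatticeHom b.isAtom
    ⟨⟨a, ha⟩, h⟩
  choose φ hφ using hexφ
  have hexm (a : hA.Atoms) :
      ∃ b, IsGreatest (hB.atomsBelow (f.toFun a.val) : Set hB.Atoms) b :=
    hB.exists_isGreatest_atomsBelow fun h => a.isAtom.ne_bot (f.inj (h.trans f.map_bot.symm))
  choose m hm using hexm
  have hfiber (b : hB.Atoms) (a : hA.Atoms) : b ∈ hB.atomsBelow (f.toFun a.val) ↔ φ b = a := by
    rw [Natural.mem_atomsBelow, hφ, a.isAtom.le_iff_eq (φ b).isAtom.ne_bot, Natural.Atoms.ext_iff]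
  have hφm (a : hA.Atoms) : φ (m a) = a := (hfiber _ _).1 (hm a).1
  have hmono : StrictMono m := by
    intro a a' haa'
    obtain ⟨c, hc, -, hlt⟩ := Finset.Colex.toColex_lt_toColex_iff_exists_forall_lt.1 <|
      hB.lt_iff_toColex_lt.1 <| (f.map_lt a.val a'.val).1 haa'
    have hma : m a ∉ hB.atomsBelow (f.toFun a'.val) := by
      rw [hfiber, hφm]
      exact haa'.ne
    exact (hlt (m a) (hm a).1 hma).trans_le ((hm a').2 hc)
  refine ⟨φ, m, ⟨hmono, hφm, fun b => (hm (φ b)).2 ((hfiber _ _).2 rfl)⟩, fun a => ?_, hφ⟩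
  rw [← hB.level_eq_of_isGreatest hBI (hm a), f.level_map hAI hBI]

/-- The embedding into the algebra of a chain dual to a rigid, level-preserving surjection `ρ` of
that chain onto the atoms. -/
noncomputable def ofIsRigidSection {X : Type} [LinearOrder X] [Fintype X] {U : X → UpperSet J}
    (hU : Monotone U) (hB : B.Natural) (hI : B.IdealFam) {ρ : X → hB.Atoms} {i : hB.Atoms → X}
    (hρ : IsRigidSection ρ i) (hUi : ∀ b, U (i b) = hI.level b.val) {N : UpperSet J}
    (hN : hI.level ⊥ = N) : Emb B (ofChain U N) where
  toFun := hB.preimageAtomsBelow ρ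
  inj b c h := hB.atomsBelow_injective <| Finset.ext fun a => by
    simpa [hρ.leftInverse a] using Finset.ext_iff.1 h (i a)
  map_sup := (hB.preimageAtomsBelow ρ).map_sup'
  map_inf := (hB.preimageAtomsBelow ρ).map_inf'
  map_compl := map_compl' (hB.preimageAtomsBelow ρ)
  map_bot := (hB.preimageAtomsBelow ρ).map_bot'
  map_top := (hB.preimageAtomsBelow ρ).map_top'
  map_lt b c := hB.lt_iff_toColex_lt.trans hρ.toColex_filter_lt_iff.symm
  map_P j b := by
    rw [hI.mem_P_iff_forall_isAtom, ← hI.mem_level, hN]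
    refine and_congr_right fun _ => ⟨fun h x hx => ?_, fun h a ha hab => ?_⟩
    · have hx' : j ∈ U (i (ρ x)) := by
        rw [hUi]
        exact h _ (ρ x).isAtom (by simpa using hx)
      exact hU (hρ.le_apply x) hx'
    · rw [← hI.mem_level, ← hUi ⟨a, ha⟩]
      exact h _ (by simpa [hρ.leftInverse _] using hab)

end Emb

end OrdAlg

theorem naBJ_amalgamation {J : Type} [LinearOrder J]
    (A B C : OrdAlg J) (hA : A.InNaBJ) (hB : B.InNaBJ) (hC : C.InNaBJ)
    (f : OrdAlg.Emb A B) (g : OrdAlg.Emb A C) :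
    ∃ D : OrdAlg J, D.InNaBJ ∧
      ∃ (r : OrdAlg.Emb B D) (s : OrdAlg.Emb C D),
        r.toFun ∘ f.toFun = s.toFun ∘ g.toFun := by
  obtain ⟨hAI, hAN, -⟩ := hA
  obtain ⟨hBI, hBN, b, hb, hbP⟩ := hB
  obtain ⟨hCI, hCN, -⟩ := hC
  obtain ⟨φ, m, hφ, hm, hφf⟩ := f.exists_isRigidSection hAN hBN hAI hBI
  obtain ⟨ψ, n, hψ, hn, hψg⟩ := g.exists_isRigidSection hAN hCN hAI hCI
  obtain ⟨X, _, _, ρ, i, σ, t, U, hρ, hσ, hU, hUi, hUt, hcomm⟩ := hφ.exists_amalgam hψ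
    (hBN.monotone_level_val hBI) (hCN.monotone_level_val hCI)
    (funext fun a => (hm a).trans (hn a).symm)
  have hfbot : hBI.level ⊥ = hAI.level ⊥ := f.map_bot ▸ f.level_map hAI hBI ⊥
  have hgbot : hCI.level ⊥ = hAI.level ⊥ := g.map_bot ▸ g.level_map hAI hCI ⊥
  have hUb (j : J) : j ∉ U (i ⟨b, hb⟩) := by
    rw [hUi]
    exact hbP j
  refine ⟨OrdAlg.ofChain U (hAI.level ⊥), OrdAlg.ofChain_inNaBJ hU hUb,
    .ofIsRigidSection hU hBN hBI hρ hUi hfbot,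
    .ofIsRigidSection hU hCN hCI hσ hUt hgbot, funext fun a => ?_⟩
  change hBN.preimageAtomsBelow ρ (f.toFun a) = hCN.preimageAtomsBelow σ (g.toFun a)
  ext x
  simp only [OrdAlg.Natural.mem_preimageAtomsBelow, hφf, hψg, hcomm]
end

section
/- The class na(B_J) satisfies the Ramsey property: for all structures (A, <_A), (B, <_B) in na(B_J) such that (A, <_A) embeds into (B, <_B), and every integer k ≥ 2, there exists a structure (C, <_C) in na(B_J) such that for every coloring of the copies of (A, <_A) in (C, <_C) with k colors there is a copy B' of (B, <_B) in (C, <_C) all of whose copies of (A, <_A) receive the same color. -/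
/-!
An embedding of naturally ordered algebras is dual to a surjection between their sets of atoms. With
the atoms in decreasing order, each carrying the upper set of the indices of the ideals containing
it as its rank, the surjections that arise are the ranked rigid ones, so the theorem is a dual
Ramsey theorem for ranked rigid surjections.

Without ranks, rigid surjections are parameter words, and the statement is the Graham–Rothschild
theorem. With ranks, the elements of the least rank form a final segment: the induction hypothesis
applies to the remaining elements, and the values on the final segment form a parameter word whose
letters are the elements of the domain already constructed. Applying the Graham–Rothschild theorem
to the colouring that assigns to such a word the induced colouring of all maps from the earlier
domain makes the colour independent of the final segment.

The Graham–Rothschild theorem follows by induction on the number of parameters. Iterating the case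
of one parameter fewer, with the first parameter turned into a new letter, makes the colour of a
word depend only on the letters before its first parameter; the Hales–Jewett theorem and the
pigeonhole principle then remove this dependence as well.
-/

namespace ParameterWord

open Sum

/-- A word with positions in `N`, letters in `K` and parameters in `M` is a map `N → K ⊕ M`. It is
rigid if every parameter occurs and the first occurrences of the parameters are in increasing
order. -/
structure IsRigid {N K M : Type*} [LE N] [LE M] (w : N → K ⊕ M) : Prop where
  surj : ∀ m, ∃ t, w t = inr m
  exists_le : ∀ t m, w t = inr m → ∀ m' ≤ m, ∃ s ≤ t, w s = inr m'

section Subst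

variable {N K M A A' B : Type*}

/-- The result of substituting the word `v` for the parameters of the word `h`. -/
def subst (h : N → K ⊕ M) (v : M → K ⊕ A) : N → K ⊕ A := Sum.elim inl v ∘ h

theorem subst_assoc (h : N → K ⊕ M) (v : M → K ⊕ A) (u : A → K ⊕ B) :
    subst (subst h v) u = subst h (subst v u) := by
  funext t
  rcases ht : h t <;> simp [subst, ht]

theorem subst_eq_inr_iff {h : N → K ⊕ M} {v : M → K ⊕ A} {t : N} {a : A} :
    subst h v t = inr a ↔ ∃ m, h t = inr m ∧ v m = inr a := by
  rcases ht : h t <;> simp [subst, ht]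

theorem map_comp_subst (f : A → A') (h : N → K ⊕ M) (v : M → K ⊕ A) :
    Sum.map id f ∘ subst h v = subst h (Sum.map id f ∘ v) := by
  funext t
  rcases ht : h t <;> simp [subst, ht]

theorem subst_append {m n : ℕ} (f : Fin m → K ⊕ M) (g : Fin n → K ⊕ M) (v : M → K ⊕ A) :
    subst (Fin.append f g) v = Fin.append (subst f v) (subst g v) := by
  funext t
  induction t using Fin.addCases <;> simp [subst]

theorem subst_map_zero_cons {Y : Type*} {b : ℕ} (w : N → K ⊕ Y) (x : K ⊕ A) (u : Fin b → K ⊕ A) :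
    subst (Sum.map id (fun _ => 0) ∘ w) (Fin.cons x u : Fin (b + 1) → K ⊕ A) =
      Sum.elim inl (fun _ => x) ∘ w := by
  funext t
  rcases ht : w t <;> simp [subst, ht]

theorem subst_map_succ_cons {b : ℕ} (h : N → K ⊕ Fin b) (x : K ⊕ A) (u : Fin b → K ⊕ A) :
    subst (Sum.map id Fin.succ ∘ h) (Fin.cons x u : Fin (b + 1) → K ⊕ A) = subst h u := by
  funext t
  rcases ht : h t <;> simp [subst, ht]

end Subst

section Rigid

variable {N K K' M A : Type*}

theorem IsRigid.subst [Preorder N] [LE M] [LE A] {h : N → K ⊕ M} {v : M → K ⊕ A}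
    (hh : IsRigid h) (hv : IsRigid v) : IsRigid (subst h v) where
  surj a := by
    obtain ⟨m, hm⟩ := hv.surj a
    obtain ⟨t, ht⟩ := hh.surj m
    exact ⟨t, subst_eq_inr_iff.2 ⟨m, ht, hm⟩⟩
  exists_le t a ht a' ha' := by
    obtain ⟨m, htm, hma⟩ := subst_eq_inr_iff.1 ht
    obtain ⟨m', hm', hma'⟩ := hv.exists_le m a hma a' ha'
    obtain ⟨s, hst, hsm'⟩ := hh.exists_le t m htm m' hm'
    exact ⟨s, hst, subst_eq_inr_iff.2 ⟨m', hsm', hma'⟩⟩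

theorem IsRigid.mapLetters [LE N] [LE M] {w : N → K ⊕ M} (hw : IsRigid w) (f : K → K') :
    IsRigid (Sum.map f id ∘ w) := by
  have key (t m) : (Sum.map f id ∘ w) t = inr m ↔ w t = inr m := by
    rcases ht : w t <;> simp [ht]
  exact ⟨by simpa only [key] using hw.surj, by simpa only [key] using hw.exists_le⟩

theorem IsRigid.relabel {N' M' : Type*} [LE N] [LE M] [LE N'] [LE M'] {w : N → K ⊕ M}
    (hw : IsRigid w) (f : N' ≃o N) (e : M ≃o M') : IsRigid (Sum.map id e ∘ w ∘ f) := by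
  have key (t m) : (Sum.map id e ∘ w ∘ f) t = inr m ↔ w (f t) = inr (e.symm m) := by
    rcases ht : w (f t) <;> simp [ht, e.eq_symm_apply]
  refine ⟨fun m => ?_, fun t m ht m' hm' => ?_⟩
  · obtain ⟨t, ht⟩ := hw.surj (e.symm m)
    exact ⟨f.symm t, (key _ m).2 (by simpa using ht)⟩
  · obtain ⟨s, hst, hs⟩ := hw.exists_le _ _ ((key t m).1 ht) _ (e.symm.le_iff_le.2 hm')
    exact ⟨f.symm s, f.symm_apply_le.2 hst, (key _ m').2 (by simpa using hs)⟩

end Rigid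

section LeadingLetters

variable {K K' X X' : Type*} {m n : ℕ}

open Classical in
/-- The letters of a word before its first parameter, followed by `none`s. -/
noncomputable def lead (w : Fin n → K ⊕ X) (t : Fin n) : Option K :=
  if ∀ s ≤ t, (w s).isLeft then (w t).getLeft? else none

theorem isSome_lead {w : Fin n → K ⊕ X} {t : Fin n} :
    (lead w t).isSome ↔ ∀ s ≤ t, (w s).isLeft := by
  rw [lead]
  split_ifs with h
  · simpa [h t le_rfl] using h
  · simpa using h

theorem lead_injective [IsEmpty X] :
    Function.Injective (lead : (Fin n → K ⊕ X) → Fin n → Option K) := by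
  intro v w h
  have lead_eq (u : Fin n → K ⊕ X) (t : Fin n) : lead u t = (u t).getLeft? :=
    if_pos fun s _ => by rcases u s with _ | x; exacts [rfl, isEmptyElim x]
  funext t
  have ht := congr_fun h t
  rw [lead_eq, lead_eq] at ht
  rcases hv : v t with _ | x
  · rcases hw : w t with _ | x
    · simpa [hv, hw] using ht
    · exact isEmptyElim x
  · exact isEmptyElim x

theorem lead_map (f : K → K') (g : X → X') (w : Fin n → K ⊕ X) :
    lead (Sum.map f g ∘ w) = Option.map f ∘ lead w := by
  funext t
  simp only [lead, Function.comp_apply, isLeft_map, getLeft?_map]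
  split_ifs <;> rfl

theorem lead_cons_inl (k : K) (u : Fin n → K ⊕ X) :
    lead (Fin.cons (inl k) u : Fin (n + 1) → K ⊕ X) = Fin.cons (some k) (lead u) := by
  funext t
  cases t using Fin.cases with
  | zero => simp [lead]
  | succ t => simp [lead, Fin.forall_fin_succ]

theorem lead_cons_inr (x : X) (u : Fin n → K ⊕ X) :
    lead (Fin.cons (inr x) u : Fin (n + 1) → K ⊕ X) = fun _ => none :=
  funext fun t => if_neg fun h => by simpa using h 0 t.zero_le

theorem not_natAdd_le_castAdd (i : Fin m) (j : Fin n) : ¬ Fin.natAdd m j ≤ Fin.castAdd n i := by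
  simp only [Fin.le_def, Fin.val_natAdd, Fin.val_castAdd]
  omega

theorem lead_append_inl (f : Fin m → K) (g : Fin n → K ⊕ X) :
    lead (Fin.append (inl ∘ f) g) = Fin.append (some ∘ f) (lead g) := by
  funext t
  cases t using Fin.addCases <;> simp [lead, Fin.forall_fin_add, not_natAdd_le_castAdd]

theorem lead_append_of_eq_inr {f : Fin m → K ⊕ X} {s : Fin m} {x : X} (hs : f s = inr x)
    (g : Fin n → K ⊕ X) : lead (Fin.append f g) = Fin.append (lead f) fun _ => none := by
  funext t
  cases t using Fin.addCases with
  | left t =>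
    simp only [lead, Fin.forall_fin_add, not_natAdd_le_castAdd, Fin.append_left, IsEmpty.forall_iff,
      implies_true, and_true]
    rfl
  | right t =>
    have h : ¬ ∀ i ≤ Fin.natAdd m t, (Fin.append f g i).isLeft := fun h => by
      simpa [hs] using h (Fin.castAdd n s) (not_le.1 (not_natAdd_le_castAdd s t)).le
    simp [lead, h]

end LeadingLetters

section NoneToZero

variable {K : Type*} {a b m n : ℕ}

/-- Words with parameters `0, …, a` over `K` as words with `a` parameters over `Option K`: the
letter `none` plays the role of parameter `0`, and the other parameters are shifted. -/
def noneToZero : Option K ⊕ Fin a ≃ K ⊕ Fin (a + 1) where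
  toFun := Sum.elim (Option.elim · (inr 0) inl) (inr ∘ Fin.succ)
  invFun := Sum.elim (inl ∘ some) (Fin.cases (inl none) inr)
  left_inv x := by rcases x with (_ | _) | _ <;> rfl
  right_inv x := by
    rcases x with k | i
    · rfl
    · cases i using Fin.cases <;> rfl

@[simp] theorem noneToZero_inr (i : Fin a) : noneToZero (inr i : Option K ⊕ Fin a) = inr i.succ :=
  rfl

theorem noneToZero_eq_inr_succ {x : Option K ⊕ Fin a} {i : Fin a} :
    noneToZero x = inr i.succ ↔ x = inr i :=
  noneToZero.apply_eq_iff_eq (y := inr i)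

theorem noneToZero_comp_map_some (w : Fin n → K ⊕ Fin a) :
    noneToZero ∘ Sum.map some id ∘ w = Sum.map id Fin.succ ∘ w := by
  funext t
  rcases ht : w t <;> simp [noneToZero, ht]

theorem IsRigid.append_noneToZero {f : Fin m → K ⊕ Fin (a + 1)} {s : Fin m} (hs : f s = inr 0)
    (hf : ∀ t i, f t = inr i → i = 0) {w : Fin n → Option K ⊕ Fin a} (hw : IsRigid w) :
    IsRigid (Fin.append f (noneToZero ∘ w)) where
  surj i := by
    cases i using Fin.cases with
    | zero => exact ⟨Fin.castAdd n s, by simpa using hs⟩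
    | succ i =>
      obtain ⟨t, ht⟩ := hw.surj i
      exact ⟨Fin.natAdd m t, by simpa using noneToZero_eq_inr_succ.2 ht⟩
  exists_le t i hti i' hi' := by
    cases t using Fin.addCases with
    | left t =>
      rw [Fin.append_left] at hti
      obtain rfl : i' = i := by rw [hf t i hti] at hi' ⊢; exact Fin.le_zero_iff.1 hi'
      exact ⟨_, le_rfl, by simpa using hti⟩
    | right t =>
      cases i' using Fin.cases with
      | zero =>
        exact ⟨Fin.castAdd n s, (not_le.1 (not_natAdd_le_castAdd s t)).le, by simpa using hs⟩
      | succ i' =>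
        obtain ⟨i, rfl⟩ := Fin.exists_succ_eq.2 (i'.succ_pos.trans_le hi').ne'
        rw [Fin.append_right] at hti
        obtain ⟨r, hrt, hr⟩ := hw.exists_le t i (noneToZero_eq_inr_succ.1 hti) i'
          (Fin.succ_le_succ_iff.1 hi')
        exact ⟨Fin.natAdd m r, (Fin.natAdd_le_natAdd_iff m).2 hrt, by
          simpa using noneToZero_eq_inr_succ.2 hr⟩

theorem IsRigid.of_cons_inl {k : K} {u : Fin n → K ⊕ Fin a}
    (h : IsRigid (Fin.cons (inl k) u : Fin (n + 1) → K ⊕ Fin a)) : IsRigid u where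
  surj i := by simpa [Fin.exists_fin_succ] using h.surj i
  exists_le t i ht i' hi' := by
    simpa [Fin.exists_fin_succ] using h.exists_le t.succ i ht i' hi'

theorem IsRigid.eq_zero_of_cons_inr {i : Fin (a + 1)} {u : Fin n → K ⊕ Fin (a + 1)}
    (h : IsRigid (Fin.cons (inr i) u : Fin (n + 1) → K ⊕ Fin (a + 1))) : i = 0 := by
  obtain ⟨s, hs, hs0⟩ := h.exists_le 0 i rfl 0 i.zero_le
  obtain rfl := Fin.le_zero_iff.1 hs
  exact inr_injective hs0

theorem IsRigid.noneToZero_symm {i : Fin (a + 1)} {u : Fin n → K ⊕ Fin (a + 1)}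
    (h : IsRigid (Fin.cons (inr i) u : Fin (n + 1) → K ⊕ Fin (a + 1))) :
    IsRigid (noneToZero.symm ∘ u) := by
  obtain rfl := h.eq_zero_of_cons_inr
  have key (t j) : (noneToZero.symm ∘ u) t = inr j ↔ u t = inr j.succ :=
    noneToZero.symm_apply_eq
  constructor <;> simp only [key]
  · intro j
    simpa [Fin.exists_fin_succ, (Fin.succ_ne_zero j).symm] using h.surj j.succ
  · intro t j ht j' hj'
    simpa [Fin.exists_fin_succ, (Fin.succ_ne_zero j').symm] using
      h.exists_le t.succ j.succ ht j'.succ (Fin.succ_le_succ_iff.2 hj')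

end NoneToZero

section Cutpoint

variable {K X κ : Type*}

variable (K X κ) in
theorem exists_isRigid_forall_lead_eq [Finite K] [Finite κ] (b : ℕ) :
    ∃ n, ∀ c : (Fin n → Option K) → κ, ∃ h : Fin n → K ⊕ Fin b, IsRigid h ∧
      ∃ d : (Fin b → Bool) → κ, ∀ v : Fin b → K ⊕ X,
        c (lead (subst h v)) = d fun i => (lead v i).isSome := by
  induction b with
  | zero =>
    refine ⟨0, fun c => ⟨Fin.elim0, ⟨(·.elim0), (·.elim0)⟩, fun _ => c Fin.elim0, fun v => ?_⟩⟩
    exact congrArg c (Subsingleton.elim _ _)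
  | succ b ih =>
    obtain ⟨m, hm⟩ := ih
    obtain ⟨n, hn⟩ := Combinatorics.Subspace.exists_mono_in_high_dimension_fin K
      ((Fin m → Option K) → κ) Unit
    refine ⟨n + m, fun c => ?_⟩
    obtain ⟨w, c', hw⟩ := hn fun f y => c (Fin.append (some ∘ f) y)
    obtain ⟨s, hs⟩ := w.proper ()
    obtain ⟨h, hh, d, hd⟩ := hm c'
    have h₀s : (Sum.map id (fun _ => (0 : Fin (b + 1))) ∘ w.idxFun) s = inr 0 := by simp [hs]
    refine ⟨_, .append_noneToZero h₀s (fun t i ht => ?_) (hh.mapLetters some),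
      fun p => if p 0 then d (Fin.tail p) else c (Fin.append (lead w.idxFun) fun _ => none),
      fun v => ?_⟩
    · rcases hwt : w.idxFun t <;> simp_all
    cases v using Fin.consCases with | cons x u
    rw [noneToZero_comp_map_some, subst_append, subst_map_succ_cons, subst_map_zero_cons]
    rcases x with k | x
    · have hk : Sum.elim inl (fun _ => inl k) ∘ w.idxFun = (inl ∘ w fun _ => k : _ → K ⊕ X) := by
        funext t
        rcases ht : w.idxFun t <;> simp [ht, Combinatorics.Subspace.apply_def]
      rw [hk, lead_append_inl, lead_cons_inl]
      exact (congr_fun (hw _) _).trans (by simpa [Fin.tail_def] using hd u)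
    · have hx : lead (Sum.elim inl (fun _ => inr x) ∘ w.idxFun) = lead w.idxFun :=
        (lead_map id (fun _ => x) w.idxFun).trans (by simp)
      rw [lead_append_of_eq_inr (s := s) (x := x) (by simp [hs]), hx, lead_cons_inr]
      simp

end Cutpoint

section Pigeonhole

variable {K X κ : Type*}

theorem exists_isRigid_eq_inr_iff {N M : Type*} [Preorder N] [Preorder M] [Nonempty K]
    (e : M ↪o N) : ∃ w : N → K ⊕ M, IsRigid w ∧ ∀ t m, w t = inr m ↔ e m = t := by
  obtain ⟨k⟩ := ‹Nonempty K›
  let w (t : N) : K ⊕ M := (Function.partialInv e t).elim (inl k) inr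
  have hw (t m) : w t = inr m ↔ e m = t := by
    rw [← Function.Injective.isPartialInv e.injective]
    rcases ht : Function.partialInv e t <;> simp [w, ht]
  refine ⟨w, ⟨fun m => ⟨e m, (hw _ m).2 rfl⟩, fun t m ht m' hm' => ?_⟩, hw⟩
  exact ⟨e m', (hw t m).1 ht ▸ e.le_iff_le.2 hm', (hw _ m').2 rfl⟩

theorem isSome_lead_subst_iff {n b : ℕ} {e : Fin b ↪o Fin n} {h : Fin n → K ⊕ Fin b}
    (hh : ∀ t i, h t = inr i ↔ e i = t) {v : Fin b → K ⊕ X} {i : Fin b}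
    (hi : Minimal (fun i => ∃ x, v i = inr x) i) (t : Fin n) :
    (lead (subst h v) t).isSome ↔ t < e i := by
  obtain ⟨x, hx⟩ := hi.prop
  rw [isSome_lead]
  refine ⟨fun ht => lt_of_not_ge fun hit => ?_, fun ht s hst => ?_⟩
  · have hs : subst h v (e i) = inr x := subst_eq_inr_iff.2 ⟨i, (hh _ i).2 rfl, hx⟩
    simpa [hs] using ht (e i) hit
  · rcases hs : subst h v s with _ | y
    · rfl
    · obtain ⟨j, hj, hvj⟩ := subst_eq_inr_iff.1 hs
      obtain rfl := (hh s j).1 hj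
      exact (hi.not_prop_of_lt (e.lt_iff_lt.1 (hst.trans_lt ht)) ⟨y, hvj⟩).elim

variable (K X κ) in
theorem exists_isRigid_forall_isSome_lead_eq [Nonempty K] [Finite κ] [Nonempty κ] (b : ℕ) :
    ∃ n, ∀ d : (Fin n → Bool) → κ, ∃ h : Fin n → K ⊕ Fin b, IsRigid h ∧ ∃ c₀,
      ∀ v : Fin b → K ⊕ X, (∃ i x, v i = inr x) →
        d (fun i => (lead (subst h v) i).isSome) = c₀ := by
  classical
  have := Fintype.ofFinite κ
  refine ⟨Fintype.card κ * b, fun d => ?_⟩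
  obtain ⟨c₀, hc₀⟩ := Fintype.exists_le_card_fiber_of_mul_le_card
    (fun t : Fin (Fintype.card κ * b) => d fun s => decide (s < t)) (Fintype.card_fin _).ge
  let e := Finset.orderEmbOfCardLe _ hc₀
  obtain ⟨h, hh, h_iff⟩ := exists_isRigid_eq_inr_iff (K := K) e
  refine ⟨h, hh, c₀, fun v hv => ?_⟩
  obtain ⟨i, hi⟩ := exists_minimal_of_wellFoundedLT (fun i => ∃ x, v i = inr x) hv
  have hlead : (fun t => (lead (subst h v) t).isSome) = fun t => decide (t < e i) :=
    funext fun t => Bool.eq_iff_iff.2 (by simpa using isSome_lead_subst_iff h_iff hi t)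
  rw [hlead]
  exact (Finset.mem_filter.1 (Finset.orderEmbOfCardLe_mem _ hc₀ i)).2

variable (K X κ) in
theorem exists_isRigid_forall_exists_eq_inr_lead_eq [Finite K] [Finite κ] [Nonempty κ] (b : ℕ) :
    ∃ n, ∀ c : (Fin n → Option K) → κ, ∃ h : Fin n → K ⊕ Fin b, IsRigid h ∧ ∃ c₀,
      ∀ v : Fin b → K ⊕ X, (∃ i x, v i = inr x) → c (lead (subst h v)) = c₀ := by
  cases isEmpty_or_nonempty K with
  | inl _ =>
    have h : IsRigid (inr : Fin b → K ⊕ Fin b) :=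
      ⟨fun m => ⟨m, rfl⟩, fun t m ht m' hm' => ⟨m', inr_injective ht ▸ hm', rfl⟩⟩
    exact ⟨b, fun c => ⟨_, h, c fun _ => none, fun v _ => congrArg c (Subsingleton.elim _ _)⟩⟩
  | inr _ =>
    obtain ⟨m, hm⟩ := exists_isRigid_forall_isSome_lead_eq K X κ b
    obtain ⟨n, hn⟩ := exists_isRigid_forall_lead_eq K X κ m
    refine ⟨n, fun c => ?_⟩
    obtain ⟨h₁, hh₁, d, hd⟩ := hn c
    obtain ⟨h₂, hh₂, c₀, hc₀⟩ := hm d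
    exact ⟨subst h₁ h₂, hh₁.subst hh₂, c₀, fun v hv => by rw [subst_assoc, hd, hc₀ v hv]⟩

end Pigeonhole

section GrahamRothschild

universe u

/-- The assertion of the Graham–Rothschild theorem for words with `a` parameters: every colouring
of the words of a suitable length is constant on the rigid words inside some rigid word with `b`
parameters. -/
def GrahamRothschild (a : ℕ) : Prop :=
  ∀ (K κ : Type u) [Finite K] [Finite κ] [Nonempty κ] (b : ℕ), ∃ n,
    ∀ χ : (Fin n → K ⊕ Fin a) → κ, ∃ h : Fin n → K ⊕ Fin b, IsRigid h ∧ ∃ c,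
      ∀ v, IsRigid v → χ (subst h v) = c

variable {a : ℕ}

theorem grahamRothschild_zero : GrahamRothschild.{u} 0 := by
  intro K κ _ _ _ b
  obtain ⟨n, hn⟩ := exists_isRigid_forall_lead_eq K (Fin 0) κ b
  refine ⟨n, fun χ => ?_⟩
  obtain ⟨h, hh, d, hd⟩ := hn (Function.extend lead χ fun _ => Classical.arbitrary κ)
  refine ⟨h, hh, d fun _ => true, fun v _ => ?_⟩
  rw [← lead_injective.extend_apply χ _ (subst h v), hd]
  congr! 2 with i
  exact isSome_lead.2 fun s _ => by rcases v s with _ | x; exacts [rfl, x.elim0]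

variable {m n b : ℕ}

theorem subst_append_noneToZero_cons_inr {K : Type*} (w : Fin n → Option K ⊕ Fin b)
    (u : Fin b → K ⊕ Fin (a + 1)) :
    subst (Fin.append (fun _ : Fin m => inr 0) (noneToZero ∘ w))
        (Fin.cons (inr 0) u : Fin (b + 1) → K ⊕ Fin (a + 1)) =
      Fin.append (fun _ => inr 0) (noneToZero ∘ subst w (noneToZero.symm ∘ u)) := by
  rw [subst_append]
  congr 1
  funext t
  rcases ht : w t with (_ | _) | i
  · simp [subst, noneToZero, ht]
  · simp [subst, noneToZero, ht]
  · simp [subst, ht]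

theorem subst_append_noneToZero_cons_inl {K A : Type*} (w : Fin n → Option K ⊕ Fin b) (k : K)
    (u : Fin b → K ⊕ A) :
    subst (Fin.append (fun _ : Fin m => inr 0) (noneToZero ∘ w))
        (Fin.cons (inl k) u : Fin (b + 1) → K ⊕ A) =
      Fin.append (fun _ => inl k)
        (Sum.map (Option.getD · k) id ∘ subst w (Sum.map some id ∘ u)) := by
  rw [subst_append]
  congr 1
  funext t
  rcases ht : w t with (_ | _) | i
  · simp [subst, noneToZero, ht]
  · simp [subst, noneToZero, ht]
  · rcases hi : u i <;> simp [subst, noneToZero, ht, hi]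

theorem GrahamRothschild.exists_isRigid_forall_lead_eq_lead (ha : GrahamRothschild.{u} a) (m : ℕ) :
    ∀ (K κ : Type u) [Finite K] [Finite κ] [Nonempty κ], ∃ n, ∀ χ : (Fin n → K ⊕ Fin (a + 1)) → κ,
      ∃ h : Fin n → K ⊕ Fin m, IsRigid h ∧ ∀ v v', IsRigid v → IsRigid v' → lead v = lead v' →
        χ (subst h v) = χ (subst h v') := by
  induction m with
  | zero =>
    intro K κ _ _ _
    exact ⟨0, fun χ => ⟨Fin.elim0, ⟨(·.elim0), (·.elim0)⟩, fun _ _ _ _ _ =>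
      congrArg χ (Subsingleton.elim _ _)⟩⟩
  | succ m ih =>
    intro K κ _ _ _
    obtain ⟨m', hm'⟩ := ih (Option K) (K → κ)
    obtain ⟨n, hn⟩ := ha (Option K) κ m'
    refine ⟨1 + n, fun χ => ?_⟩
    obtain ⟨h₁, hh₁, c, hc⟩ := hn fun w => χ (Fin.append (fun _ => inr 0) (noneToZero ∘ w))
    obtain ⟨h₂, hh₂, hχ⟩ := hm' fun w k =>
      χ (Fin.append (fun _ => inl k) (Sum.map (Option.getD · k) id ∘ subst h₁ w))
    let h : Fin (1 + n) → K ⊕ Fin (m + 1) :=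
      Fin.append (fun _ => inr 0) (noneToZero ∘ subst h₁ h₂)
    have hinr {i u} (hv : IsRigid (Fin.cons (inr i) u : Fin (m + 1) → K ⊕ Fin (a + 1))) :
        χ (subst h (Fin.cons (inr i) u)) = c := by
      obtain rfl := hv.eq_zero_of_cons_inr
      rw [subst_append_noneToZero_cons_inr, subst_assoc]
      exact hc _ (hh₂.subst hv.noneToZero_symm)
    have hinl {k u u'} (hu : IsRigid u) (hu' : IsRigid u') (huu' : lead u = lead u') :
        χ (subst h (Fin.cons (inl k) u)) = χ (subst h (Fin.cons (inl k) u')) := by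
      simp only [h, subst_append_noneToZero_cons_inl, subst_assoc]
      exact congr_fun (hχ _ _ (hu.mapLetters some) (hu'.mapLetters some)
        (by rw [lead_map, lead_map, huu'])) k
    refine ⟨h, .append_noneToZero (f := fun _ => inr 0) (s := 0) rfl (by simp) (hh₁.subst hh₂),
      fun v v' hv hv' hvv' => ?_⟩
    cases v using Fin.consCases with | cons x u
    cases v' using Fin.consCases with | cons x' u'
    rcases x with k | i <;> rcases x' with k' | i'
    · rw [lead_cons_inl, lead_cons_inl, Fin.cons_inj, Option.some_inj] at hvv'
      obtain ⟨rfl, huu'⟩ := hvv'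
      exact hinl hv.of_cons_inl hv'.of_cons_inl huu'
    · simpa [lead_cons_inl, lead_cons_inr] using congr_fun hvv' 0
    · simpa [lead_cons_inl, lead_cons_inr] using congr_fun hvv' 0
    · rw [hinr hv, hinr hv']

theorem GrahamRothschild.succ (ha : GrahamRothschild.{u} a) : GrahamRothschild.{u} (a + 1) := by
  intro K κ _ _ _ b
  obtain ⟨m, hm⟩ := exists_isRigid_forall_exists_eq_inr_lead_eq K (Fin (a + 1)) κ b
  obtain ⟨n, hn⟩ := ha.exists_isRigid_forall_lead_eq_lead m K κ
  refine ⟨n, fun χ => ?_⟩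
  obtain ⟨h₁, hh₁, hχ⟩ := hn χ
  obtain ⟨c, hc⟩ := (Function.factorsThrough_iff
    (f := fun v : {v : Fin m → K ⊕ Fin (a + 1) // IsRigid v} => lead v.1)
    fun v => χ (subst h₁ v)).1 fun v v' hvv' => hχ v v' v.2 v'.2 hvv'
  obtain ⟨h₂, hh₂, c₀, hc₀⟩ := hm c
  refine ⟨subst h₁ h₂, hh₁.subst hh₂, c₀, fun v hv => ?_⟩
  obtain ⟨i, hi⟩ := hv.surj 0
  rw [subst_assoc, ← hc₀ v ⟨i, 0, hi⟩]
  exact congr_fun hc ⟨_, hh₂.subst hv⟩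

theorem grahamRothschild (a : ℕ) : GrahamRothschild.{u} a := by
  induction a with
  | zero => exact grahamRothschild_zero
  | succ a ih => exact ih.succ

theorem exists_isRigid_forall_subst_eq (K κ : Type u) [Finite K] [Finite κ] [Nonempty κ]
    (A B : Type*) [LinearOrder A] [Finite A] [LinearOrder B] [Finite B] :
    ∃ n, ∀ χ : (Fin n → K ⊕ A) → κ, ∃ h : Fin n → K ⊕ B, IsRigid h ∧ ∃ c,
      ∀ v, IsRigid v → χ (subst h v) = c := by
  have := Fintype.ofFinite A
  have := Fintype.ofFinite B
  let eA := Fintype.orderIsoFinOfCardEq A rfl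
  let eB := Fintype.orderIsoFinOfCardEq B rfl
  obtain ⟨n, hn⟩ := grahamRothschild (Fintype.card A) K κ (Fintype.card B)
  refine ⟨n, fun χ => ?_⟩
  obtain ⟨h, hh, c, hc⟩ := hn fun w => χ (Sum.map id eA ∘ w)
  refine ⟨Sum.map id eB ∘ h, hh.relabel (OrderIso.refl _) eB, c, fun v hv => ?_⟩
  rw [← hc _ (hv.relabel eB eA.symm), map_comp_subst]
  congr 1
  funext t
  rcases ht : h t with k | i
  · simp [subst, ht]
  · rcases hi : v (eB i) <;> simp [subst, ht, hi]

end GrahamRothschild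

end ParameterWord

/-- Rigid surjections between orders whose elements carry ranks: first occurrences of values are in
increasing order, ranks may only grow, and every value is attained at an element of its own rank. -/
structure IsRankedRigid {L C A : Type*} [LE L] [LE C] [LE A] (ρC : C → L) (ρA : A → L)
    (g : C → A) : Prop where
  exists_eq_rank : ∀ a, ∃ c, g c = a ∧ ρC c = ρA a
  rank_le : ∀ c, ρC c ≤ ρA (g c)
  exists_le_eq : ∀ c, ∀ a ≤ g c, ∃ c' ≤ c, g c' = a

namespace IsRankedRigid

open ParameterWord Sum

theorem surjective {L C A : Type*} [LE L] [LE C] [LE A] {ρC : C → L} {ρA : A → L} {g : C → A}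
    (hg : IsRankedRigid ρC ρA g) : Function.Surjective g := fun a =>
  (hg.exists_eq_rank a).imp fun _ => And.left

section Glue

variable {C N A L : Type*} {p : A → Prop}

/-- The map on `C ⊕ₗ N` given by `u` on `C` and by the word `w` on `N`, where the letter `c` of `w`
stands for the value `u c`. -/
def glue (u : C → {a // p a}) (w : N → C ⊕ {a // ¬ p a}) (x : C ⊕ₗ N) : A :=
  Sum.elim (fun c => (u c).1) (fun t => Sum.elim (fun c => (u c).1) (·.1) (w t)) (ofLex x)

variable [LinearOrder L] [LinearOrder C] [LinearOrder N] [LinearOrder A] {ρC : C → L} {ρA : A → L}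
  {l : L}

theorem glue_isRankedRigid (hρA : Antitone ρA) (hl : ∀ a, l ≤ ρA a) {u : C → {a // l < ρA a}}
    (hu : IsRankedRigid ρC (fun a => ρA a.1) u) {w : N → C ⊕ {a // ¬ l < ρA a}} (hw : IsRigid w) :
    IsRankedRigid (fun x : C ⊕ₗ N => Sum.elim ρC (fun _ => l) (ofLex x)) ρA (glue u w) where
  exists_eq_rank a := by
    by_cases ha : l < ρA a
    · obtain ⟨c, hc, hca⟩ := hu.exists_eq_rank ⟨a, ha⟩
      exact ⟨toLex (inl c), congrArg Subtype.val hc, hca⟩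
    · obtain ⟨t, ht⟩ := hw.surj ⟨a, ha⟩
      exact ⟨toLex (inr t), by simp [glue, ht], (hl a).antisymm (not_lt.1 ha)⟩
  rank_le x := by
    rcases x with c | t
    exacts [hu.rank_le c, hl _]
  exists_le_eq x a ha := by
    rcases x with c | t
    · obtain ⟨c', hc', hca⟩ := hu.exists_le_eq c ⟨a, (u c).2.trans_le (hρA ha)⟩ ha
      exact ⟨toLex (inl c'), Sum.Lex.inl_le_inl_iff.2 hc', congrArg Subtype.val hca⟩
    · by_cases hla : l < ρA a
      · obtain ⟨c, hc⟩ := hu.surjective ⟨a, hla⟩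
        exact ⟨toLex (inl c), Sum.Lex.inl_le_inr c t, congrArg Subtype.val hc⟩
      · rcases ht : w t with c | a'
        · have hx : glue u w (toLex (inr t)) = u c := by simp [glue, ht]
          exact (hla ((u c).2.trans_le (hρA (ha.trans_eq hx)))).elim
        · have hx : glue u w (toLex (inr t)) = a' := by simp [glue, ht]
          obtain ⟨s, hst, hs⟩ := hw.exists_le t a' ht ⟨a, hla⟩ (ha.trans_eq hx)
          exact ⟨toLex (inr s), Sum.Lex.inr_le_inr_iff.2 hst, by simp [glue, hs]⟩

theorem antitone_sumElim_const (hρC : Antitone ρC) (hl : ∀ c, l ≤ ρC c) :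
    Antitone fun x : C ⊕ₗ N => Sum.elim ρC (fun _ => l) (ofLex x) := by
  rintro (c | t) (c' | t') h
  exacts [hρC (Sum.Lex.inl_le_inl_iff.1 h), hl c, (Sum.Lex.not_inr_le_inl h).elim, le_rfl]

end Glue

section Restrict

variable {L B A : Type*} [LinearOrder L] [Preorder B] [Preorder A] {ρB : B → L} {ρA : A → L}
  {g : B → A}

/-- The restriction of a ranked rigid surjection to the elements of rank greater than `l`. -/
def restrict (hg : IsRankedRigid ρB ρA g) (l : L) (b : {b // l < ρB b}) : {a // l < ρA a} :=
  ⟨g b.1, b.2.trans_le (hg.rank_le b.1)⟩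

theorem restrict_isRankedRigid (hg : IsRankedRigid ρB ρA g) (hρB : Antitone ρB) (l : L) :
    IsRankedRigid (fun b : {b // l < ρB b} => ρB b) (fun a : {a // l < ρA a} => ρA a)
      (hg.restrict l) where
  exists_eq_rank a := by
    obtain ⟨b, hba, hb⟩ := hg.exists_eq_rank a
    exact ⟨⟨b, hb ▸ a.2⟩, Subtype.ext hba, hb⟩
  rank_le b := hg.rank_le b
  exists_le_eq b a hab := by
    obtain ⟨b', hb', hba⟩ := hg.exists_le_eq b a hab
    exact ⟨⟨b', b.2.trans_le (hρB hb')⟩, hb', Subtype.ext hba⟩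

theorem exists_isRigid_comp_glue_eq (hg : IsRankedRigid ρB ρA g) {l : L} {C : Type*}
    {u : C → {b // l < ρB b}} (hu : Function.Surjective u) :
    ∃ v : {b // ¬ l < ρB b} → C ⊕ {a // ¬ l < ρA a}, IsRigid v ∧
      ∀ {N : Type*} (w : N → C ⊕ {b // ¬ l < ρB b}),
        g ∘ glue u w = glue (hg.restrict l ∘ u) (subst w v) := by
  have hex (b : {b // ¬ l < ρB b}) :
      ∃ x : C ⊕ {a // ¬ l < ρA a}, Sum.elim (fun c => g (u c)) (·.1) x = g b := by
    by_cases hb : l < ρA (g b)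
    · obtain ⟨b', hb', hrank⟩ := hg.exists_eq_rank (g b)
      obtain ⟨c, hc⟩ := hu ⟨b', hrank ▸ hb⟩
      exact ⟨inl c, by simp [hc, hb']⟩
    · exact ⟨inr ⟨g b, hb⟩, rfl⟩
  choose v hv using hex
  have hv_inr (b a) : v b = inr a ↔ g b = a := by
    rw [← hv b]
    rcases v b with c | a'
    · simpa using fun h : g (u c) = a => a.2 (h ▸ (hg.restrict l (u c)).2)
    · simp [Subtype.ext_iff]
  refine ⟨v, ⟨fun a => ?_, fun b a hba a' ha' => ?_⟩, fun w => ?_⟩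
  · obtain ⟨b, hba, hb⟩ := hg.exists_eq_rank a
    exact ⟨⟨b, hb ▸ a.2⟩, (hv_inr _ a).2 hba⟩
  · obtain ⟨b', hb', hba'⟩ := hg.exists_le_eq b a' (((hv_inr b a).1 hba).symm ▸ ha')
    exact ⟨⟨b', fun hlb' => a'.2 (hba' ▸ hlb'.trans_le (hg.rank_le b'))⟩, hb', (hv_inr _ a').2 hba'⟩
  · funext x
    rcases x with c | t
    · rfl
    · change g (glue u w (toLex (inr t))) = glue _ _ (toLex (inr t))
      rcases ht : w t with c | b
      · simp [glue, subst, ht, restrict]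
      · simpa [glue, subst, ht, restrict] using (hv b).symm

end Restrict

universe u

variable {L : Type*} [LinearOrder L] {κ : Type u} [Finite κ] [Nonempty κ]

theorem exists_forall_comp_eq (A B : Type u) [LinearOrder A] [Finite A] [LinearOrder B] [Finite B]
    (ρA : A → L) (ρB : B → L) (hρB : Antitone ρB) :
    ∃ (C : Type u) (_ : LinearOrder C) (_ : Finite C) (ρC : C → L), Antitone ρC ∧
      (∀ c, ∃ b, ρC c = ρB b) ∧ ∀ χ : (C → A) → κ, ∃ h, IsRankedRigid ρC ρB h ∧
        ∀ g g', IsRankedRigid ρB ρA g → IsRankedRigid ρB ρA g' → χ (g ∘ h) = χ (g' ∘ h) := by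
  induction hcard : Nat.card B using Nat.strong_induction_on generalizing A B κ with | _ _ ih
  cases isEmpty_or_nonempty B with
  | inl _ =>
    refine ⟨PEmpty, inferInstance, inferInstance, isEmptyElim, isEmptyElim, isEmptyElim,
      fun χ => ?_⟩
    exact ⟨isEmptyElim, ⟨isEmptyElim, isEmptyElim, isEmptyElim⟩, fun _ _ _ _ =>
      congrArg χ (Subsingleton.elim _ _)⟩
  | inr _ =>
    obtain ⟨b₀, hl⟩ := Finite.exists_min ρB
    set l := ρB b₀
    have hlt : Nat.card {b // l < ρB b} < Nat.card B :=
      Finite.card_subtype_lt (x := b₀) (lt_irrefl l)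
    obtain ⟨C, _, _, ρC, hρC, hρCB, hC⟩ := ih _ (hcard ▸ hlt) {a // l < ρA a} {b // l < ρB b}
      (fun a => ρA a) (fun b => ρB b) (fun _ _ h => hρB h) rfl (κ := κ)
    obtain ⟨n, hn⟩ := exists_isRigid_forall_subst_eq C ((C → {a // l < ρA a}) → κ)
      {a // ¬ l < ρA a} {b // ¬ l < ρB b}
    refine ⟨C ⊕ₗ Fin n, inferInstance, inferInstanceAs (Finite (C ⊕ Fin n)),
      fun x => Sum.elim ρC (fun _ => l) (ofLex x), ?_, ?_, fun χ => ?_⟩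
    · exact antitone_sumElim_const hρC fun c => (hρCB c).choose_spec ▸ (hl _)
    · rintro (c | t)
      exacts [(hρCB c).elim fun b hb => ⟨b, hb⟩, ⟨b₀, rfl⟩]
    obtain ⟨w, hw, col, hcol⟩ := hn fun w u => χ (glue u w)
    obtain ⟨h, hh, hχ⟩ := hC col
    have key {g} (hg : IsRankedRigid ρB ρA g) : χ (g ∘ glue h w) = col (hg.restrict l ∘ h) := by
      obtain ⟨v, hv, hgv⟩ := hg.exists_isRigid_comp_glue_eq hh.surjective
      rw [hgv, ← hcol v hv]
    refine ⟨glue h w, glue_isRankedRigid hρB hl hh hw, fun g g' hg hg' => ?_⟩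
    rw [key hg, key hg']
    exact hχ _ _ (hg.restrict_isRankedRigid hρB l) (hg'.restrict_isRankedRigid hρB l)

end IsRankedRigid

namespace OrdAlg

theorem atom_le_compl_iff {α : Type*} [BooleanAlgebra α] {a x : α} (ha : IsAtom a) :
    a ≤ xᶜ ↔ ¬ a ≤ x := by
  rw [le_compl_iff_disjoint_right, ha.not_le_iff_disjoint]

theorem atom_le_sup_iff {α : Type*} [DistribLattice α] [OrderBot α] {a x y : α} (ha : IsAtom a) :
    a ≤ x ⊔ y ↔ a ≤ x ∨ a ≤ y := by
  rw [← not_iff_not, not_or, ha.not_le_iff_disjoint, ha.not_le_iff_disjoint,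
    ha.not_le_iff_disjoint, disjoint_sup_right]

variable {J : Type} [LinearOrder J] {A B : OrdAlg J}

/-- The rank of an element: the upper set of the indices of the ideals containing it. As `UpperSet`
is ordered by reverse inclusion, the elements lying in no ideal are those of rank `⊤`. -/
def IdealFam.rank (iA : A.IdealFam) (x : A.carrier) : UpperSet J :=
  ⟨{j | x ∈ A.P j}, fun i j hij hx => iA.2.2.2 i j hij hx⟩

theorem IdealFam.rank_mono (iA : A.IdealFam) : Monotone iA.rank :=
  fun _ _ hxy j hj => iA.2.1 j _ hj _ hxy

theorem IdealFam.mem_of_forall_atom_mem (iA : A.IdealFam) {j : J} (hbot : ⊥ ∈ A.P j)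
    {x : A.carrier} (hx : ∀ a, IsAtom a → a ≤ x → a ∈ A.P j) : x ∈ A.P j := by
  induction x using WellFoundedLT.induction with | _ x ih
  rcases eq_or_ne x ⊥ with rfl | hne
  · exact hbot
  obtain ⟨a, ha, hax⟩ := (eq_bot_or_exists_atom_le x).resolve_left hne
  rw [← sup_sdiff_cancel_right hax]
  exact iA.2.2.1 j _ (hx a ha hax) _ <| ih _ (sdiff_lt hax ha.1) fun b hb hbx =>
    hx b hb (hbx.trans sdiff_le)

namespace Natural

/-- The atoms of a naturally ordered algebra. The proof `nA` is a parameter so that the type can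
carry the reverse of `A.lt` as its order: the greatest atom then becomes the least element. -/
@[ext]
structure Atom (nA : A.Natural) where
  val : A.carrier
  isAtom : IsAtom val

namespace Atom

variable {nA : A.Natural}

instance : Finite nA.Atom := Finite.of_injective val fun _ _ => Atom.ext

noncomputable instance : LinearOrder nA.Atom :=
  haveI := nA.1
  haveI : IsStrictTotalOrder nA.Atom fun a b => A.lt b.val a.val :=
    { trichotomous _ _ hab hba := Atom.ext (Std.Trichotomous.trichotomous (r := A.lt) _ _ hba hab)
      irrefl _ := irrefl_of A.lt _
      trans _ _ _ hab hbc := trans_of A.lt hbc hab }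
  haveI := Classical.decRel fun a b : nA.Atom => A.lt b.val a.val
  linearOrderOfSTO fun a b => A.lt b.val a.val

theorem lt_iff {a b : nA.Atom} : a < b ↔ A.lt b.val a.val := Iff.rfl

theorem val_le_val_iff {a b : nA.Atom} : a.val ≤ b.val ↔ a = b := by
  rw [b.isAtom.le_iff_eq a.isAtom.1, Atom.ext_iff]

end Atom

variable (nA : A.Natural)

theorem rank_antitone (iA : A.IdealFam) : Antitone fun a : nA.Atom => iA.rank a.val := by
  refine antitone_iff_forall_lt.2 fun a b hab i hi => by_contra fun hb => ?_
  exact hab.not_gt (nA.2.1 _ _ a.isAtom b.isAtom ⟨i, hi, hb⟩)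

theorem lt_iff {x y : A.carrier} : A.lt x y ↔
    ∃ a : nA.Atom, a.val ≤ y ∧ ¬ a.val ≤ x ∧ ∀ b < a, (b.val ≤ x ↔ b.val ≤ y) := by
  have := nA.1
  rcases eq_or_ne x y with rfl | hxy
  · exact iff_of_false (irrefl_of A.lt x) fun ⟨_, hax, hax', _⟩ => hax' hax
  rw [nA.2.2 x y hxy]
  constructor
  · rintro ⟨a, ha, hay, hax, hmax⟩
    refine ⟨⟨a, ha⟩, hay, hax, fun b hb => by_contra fun hne => ?_⟩
    rcases hmax b.val b.isAtom hne with hba | hba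
    exacts [hb.ne (Atom.ext hba), hb.not_gt hba]
  · rintro ⟨a, hay, hax, hmin⟩
    refine ⟨a.val, a.isAtom, hay, hax, fun d hd hne => ?_⟩
    have had : a ≤ ⟨d, hd⟩ := not_lt.1 fun hda => hne (hmin _ hda)
    exact had.eq_or_lt.imp (fun h => (congrArg Atom.val h).symm) id

/-- The homomorphism to the power set of `C` dual to a map from `C` to the atoms. -/
def dualMap {nA : A.Natural} {C : Type} (f : C → nA.Atom) (x : A.carrier) : Set C :=
  {c | (f c).val ≤ x}

theorem dualMap_injective {nA : A.Natural} {C : Type} {f : C → nA.Atom}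
    (hf : Function.Surjective f) : Function.Injective (dualMap f) := by
  intro x y hxy
  refine BooleanAlgebra.eq_iff_atom_le_iff.2 fun a ha => ?_
  obtain ⟨c, hc⟩ := hf ⟨a, ha⟩
  simpa [dualMap, hc] using Set.ext_iff.1 hxy c

end Natural

section Powerset

variable {C : Type} [LinearOrder C] [Finite C] {ρ : C → UpperSet J} {E : UpperSet J}

/-- The power set of a finite linear order `C` with ranks `ρ`, ordered so that the singletons are in
the reverse order of `C`. The indices of the ideals containing `∅` are the elements of `E`. -/
noncomputable abbrev powerset (C : Type) [LinearOrder C] [Finite C] (ρ : C → UpperSet J)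
    (E : UpperSet J) : OrdAlg J where
  carrier := Set C
  fin := Fintype.ofFinite _
  P j := {S | j ∈ E ∧ ∀ c ∈ S, j ∈ ρ c}
  lt S T := toLex (· ∈ S) < toLex (· ∈ T)

theorem powerset_lt_iff {S T : Set C} :
    (powerset C ρ E).lt S T ↔ ∃ c ∈ T, c ∉ S ∧ ∀ d < c, (d ∈ S ↔ d ∈ T) := by
  refine exists_congr fun c => ?_
  simp only [lt_iff_le_not_ge, le_Prop_eq, Pi.toLex_apply, eq_iff_iff, Classical.not_imp]
  tauto

theorem powerset_lt_singleton_iff {c d : C} :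
    (powerset C ρ E).lt ({d} : Set C) ({c} : Set C) ↔ c < d := by
  rw [powerset_lt_iff]
  constructor
  · rintro ⟨_, rfl, hcd, h⟩
    refine (lt_or_gt_of_ne hcd).resolve_right fun hdc => hdc.ne ((h d hdc).1 rfl)
  · rintro hcd
    exact ⟨c, rfl, hcd.ne, fun e he => iff_of_false (he.trans hcd).ne he.ne⟩

theorem powerset_idealFam (hc : ∃ c, ρ c = ⊤) : (powerset C ρ E).IdealFam := by
  obtain ⟨c, hc⟩ := hc
  refine ⟨fun j hj => ?_, fun j S hS T hTS => ⟨hS.1, fun d hd => hS.2 d (hTS hd)⟩,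
    fun j S hS T hT => ⟨hS.1, fun d hd => hd.elim (hS.2 d) (hT.2 d)⟩,
    fun i j hij S hS => ⟨E.upper hij hS.1, fun d hd => (ρ d).upper hij (hS.2 d hd)⟩⟩
  exact UpperSet.notMem_top (hc ▸ hj.2 c trivial)

theorem powerset_isStrictTotalOrder : IsStrictTotalOrder (Set C) (powerset C ρ E).lt where
  irrefl _ := lt_irrefl (α := Lex (C → Prop)) _
  trans _ _ _ := lt_trans (α := Lex (C → Prop))
  trichotomous _ _ h h' := le_antisymm (α := Lex (C → Prop)) (not_lt.1 h') (not_lt.1 h)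

theorem powerset_proper (hρ : Antitone ρ) : (powerset C ρ E).Proper := by
  rintro S T hS hT ⟨i, hiS, hiT⟩
  obtain ⟨s, rfl⟩ := Set.isAtom_iff.1 hS
  obtain ⟨t, rfl⟩ := Set.isAtom_iff.1 hT
  refine powerset_lt_singleton_iff.2 <| lt_of_not_ge fun hst => hiT ⟨hiS.1, ?_⟩
  rintro _ rfl
  exact hρ hst (hiS.2 s rfl)

theorem powerset_natural (hρ : Antitone ρ) : (powerset C ρ E).Natural := by
  refine ⟨powerset_isStrictTotalOrder, powerset_proper hρ, fun S T _ => ?_⟩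
  have hle (c : C) (U : Set C) : ({c} : Set C) ≤ U ↔ c ∈ U := Set.singleton_subset_iff
  rw [powerset_lt_iff]
  constructor
  · rintro ⟨c, hcT, hcS, hmin⟩
    refine ⟨({c} : Set C), Set.isAtom_singleton c, (hle c T).2 hcT, mt (hle c S).1 hcS, ?_⟩
    rintro D hD hd
    obtain ⟨d, rfl⟩ := Set.isAtom_iff.1 hD
    rw [hle, hle] at hd
    rw [powerset_lt_singleton_iff, Set.singleton_eq_singleton_iff]
    exact (not_lt.1 (mt (hmin d) hd)).eq_or_lt.imp_left Eq.symm
  · rintro ⟨D, hD, hDT, hDS, hmax⟩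
    obtain ⟨c, rfl⟩ := Set.isAtom_iff.1 hD
    refine ⟨c, (hle c T).1 hDT, mt (hle c S).2 hDS, fun d hdc => by_contra fun hd => ?_⟩
    have h := hmax ({d} : Set C) (Set.isAtom_singleton d) (by rwa [hle, hle])
    rw [powerset_lt_singleton_iff, Set.singleton_eq_singleton_iff] at h
    exact h.elim hdc.ne hdc.not_gt

theorem powerset_inNaBJ (hρ : Antitone ρ) (hc : ∃ c, ρ c = ⊤) : (powerset C ρ E).InNaBJ := by
  refine ⟨powerset_idealFam hc, powerset_natural hρ, ?_⟩
  obtain ⟨c, hc⟩ := hc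
  exact ⟨({c} : Set C), Set.isAtom_singleton c, fun j hj =>
    UpperSet.notMem_top (hc ▸ hj.2 c rfl)⟩

end Powerset

namespace Natural

variable {iB : B.IdealFam} {nB : B.Natural} {C : Type} [LinearOrder C] [Finite C]
  {ρ : C → UpperSet J} {h : C → nB.Atom}

theorem lt_iff_dualMap_lt {E : UpperSet J} (hsurj : Function.Surjective h)
    (hh : ∀ c, ∀ b ≤ h c, ∃ c' ≤ c, h c' = b) {x y : B.carrier} :
    B.lt x y ↔ (powerset C ρ E).lt (dualMap h x) (dualMap h y) := by
  rw [nB.lt_iff, powerset_lt_iff]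
  constructor
  · rintro ⟨b, hby, hbx, hmin⟩
    obtain ⟨c, rfl, hc⟩ := (Set.toFinite (h ⁻¹' {b})).exists_minimal (hsurj b)
    refine ⟨c, hby, hbx, fun d hd => hmin _ <| lt_of_not_ge fun hcd => ?_⟩
    obtain ⟨d', hd', hdc⟩ := hh d _ hcd
    exact (hd'.trans_lt hd).not_ge (hc hdc (hd'.trans hd.le))
  · rintro ⟨c, hcy, hcx, hmin⟩
    refine ⟨h c, hcy, hcx, fun b hb => ?_⟩
    obtain ⟨c', hc', rfl⟩ := hh c b hb.le
    exact hmin c' (hc'.lt_of_ne (by rintro rfl; exact hb.false))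

theorem mem_iff_dualMap_mem (hh : IsRankedRigid ρ (fun b : nB.Atom => iB.rank b.val) h) {j : J}
    {x : B.carrier} : x ∈ B.P j ↔ dualMap h x ∈ (powerset C ρ (iB.rank ⊥)).P j := by
  constructor
  · exact fun hx => ⟨iB.rank_mono bot_le hx, fun c hc => hh.rank_le c (iB.rank_mono hc hx)⟩
  · rintro ⟨hbot, hx⟩
    refine iB.mem_of_forall_atom_mem hbot fun b hb hbx => ?_
    obtain ⟨c, hc, hρ⟩ := hh.exists_eq_rank ⟨b, hb⟩
    have hj : j ∈ ρ c := hx c (by simpa [dualMap, hc])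
    rwa [hρ] at hj

end Natural

namespace Emb

/-- The embedding into a power set algebra dual to a ranked rigid surjection onto the atoms. -/
def ofRankedRigid {iB : B.IdealFam} {nB : B.Natural} {C : Type} [LinearOrder C] [Finite C]
    {ρ : C → UpperSet J} {h : C → nB.Atom}
    (hh : IsRankedRigid ρ (fun b : nB.Atom => iB.rank b.val) h) :
    Emb B (powerset C ρ (iB.rank ⊥)) where
  toFun := Natural.dualMap h
  inj := Natural.dualMap_injective hh.surjective
  map_sup _ _ := Set.ext fun c => atom_le_sup_iff (h c).isAtom
  map_inf _ _ := Set.ext fun _ => le_inf_iff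
  map_compl _ := Set.ext fun c => atom_le_compl_iff (h c).isAtom
  map_bot := Set.eq_empty_of_forall_notMem fun c hc => (h c).isAtom.1 (le_bot_iff.1 hc)
  map_top := Set.eq_univ_of_forall fun _ => le_top
  map_lt _ _ := Natural.lt_iff_dualMap_lt hh.surjective hh.exists_le_eq
  map_P _ _ := Natural.mem_iff_dualMap_mem hh

theorem map_le_iff (φ : Emb A B) {x y : A.carrier} : φ.toFun x ≤ φ.toFun y ↔ x ≤ y := by
  rw [← inf_eq_left, ← φ.map_inf, φ.inj.eq_iff, inf_eq_left]

theorem exists_atom_le_iff (φ : Emb A B) {b : B.carrier} (hb : IsAtom b) :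
    ∃ a, IsAtom a ∧ ∀ x, b ≤ φ.toFun x ↔ a ≤ x := by
  obtain ⟨a, hba, ha⟩ := (Set.toFinite {x | b ≤ φ.toFun x}).exists_minimal
    ⟨⊤, by simp [φ.map_top]⟩
  have key (x) : b ≤ φ.toFun x ↔ a ≤ x := by
    refine ⟨fun hbx => ?_, fun hax => hba.trans (φ.map_le_iff.2 hax)⟩
    have hinf : b ≤ φ.toFun (a ⊓ x) := φ.map_inf a x ▸ le_inf hba hbx
    exact (ha hinf inf_le_left).trans inf_le_right
  refine ⟨a, ⟨fun ha₀ => hb.1 ?_, fun y hya => ?_⟩, key⟩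
  · simpa [φ.map_bot] using (key ⊥).2 ha₀.le
  · have hay : a ≤ yᶜ := by
      rw [← key, φ.map_compl, atom_le_compl_iff hb, key]
      exact hya.not_ge
    exact le_compl_self.1 (hya.le.trans hay)

variable {nA : A.Natural} {nB : B.Natural} (φ : Emb A B)

/-- The map on atoms dual to an embedding. -/
noncomputable def dual (b : nB.Atom) : nA.Atom :=
  ⟨(φ.exists_atom_le_iff b.isAtom).choose, (φ.exists_atom_le_iff b.isAtom).choose_spec.1⟩

theorem dual_val_le_iff (b : nB.Atom) (x : A.carrier) :
    (φ.dual b : nA.Atom).val ≤ x ↔ b.val ≤ φ.toFun x :=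
  ((φ.exists_atom_le_iff b.isAtom).choose_spec.2 x).symm

theorem dual_eq_iff {b : nB.Atom} {a : nA.Atom} : φ.dual b = a ↔ b.val ≤ φ.toFun a.val := by
  rw [← Natural.Atom.val_le_val_iff, dual_val_le_iff]

theorem dual_isRankedRigid (iA : A.IdealFam) (iB : B.IdealFam) :
    IsRankedRigid (fun b : nB.Atom => iB.rank b.val) (fun a : nA.Atom => iA.rank a.val)
      φ.dual where
  exists_eq_rank a := by
    have hrank : iA.rank a.val = iB.rank (φ.toFun a.val) :=
      SetLike.ext fun j => φ.map_P j a.val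
    have hne : φ.toFun a.val ≠ ⊥ := fun h => a.isAtom.1 (φ.inj (h.trans φ.map_bot.symm))
    obtain ⟨b₀, hb₀, hb₀a⟩ := (eq_bot_or_exists_atom_le _).resolve_left hne
    obtain ⟨b, hba, hmin⟩ := (Set.toFinite {b : nB.Atom | b.val ≤ φ.toFun a.val}).exists_minimal
      ⟨⟨b₀, hb₀⟩, hb₀a⟩
    refine ⟨b, φ.dual_eq_iff.2 hba, hrank ▸ (iB.rank_mono hba).antisymm fun j hj => ?_⟩
    refine iB.mem_of_forall_atom_mem (iB.rank_mono bot_le hj) fun c hc hca => ?_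
    have hbc : b ≤ ⟨c, hc⟩ := (le_total b ⟨c, hc⟩).elim id (hmin hca)
    exact nB.rank_antitone iB hbc hj
  rank_le b j hj := iB.rank_mono (φ.dual_eq_iff.1 rfl) ((φ.map_P j _).1 hj)
  exists_le_eq b a hab := by
    rcases hab.eq_or_lt with rfl | hlt
    · exact ⟨b, le_rfl, rfl⟩
    obtain ⟨c, hca, -, hmin⟩ := nB.lt_iff.1 ((φ.map_lt _ _).1 (Natural.Atom.lt_iff.1 hlt))
    refine ⟨c, not_lt.1 fun hbc => hlt.ne' ?_, φ.dual_eq_iff.2 hca⟩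
    exact φ.dual_eq_iff.2 ((hmin b hbc).1 (φ.dual_eq_iff.1 rfl))

theorem exists_comp_eq {C : OrdAlg J} (e₁ : Emb A C) (e : Emb B C)
    (h : Set.range e₁.toFun ⊆ Set.range e.toFun) :
    ∃ φ : Emb A B, ∀ x, e.toFun (φ.toFun x) = e₁.toFun x := by
  choose f hf using fun x => h ⟨x, rfl⟩
  refine ⟨{
    toFun := f
    inj := fun x y hxy => e₁.inj (by rw [← hf, ← hf, hxy])
    map_sup := fun x y => e.inj (by simp only [hf, e.map_sup, e₁.map_sup])
    map_inf := fun x y => e.inj (by simp only [hf, e.map_inf, e₁.map_inf])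
    map_compl := fun x => e.inj (by simp only [hf, e.map_compl, e₁.map_compl])
    map_bot := e.inj (by rw [hf, e.map_bot, e₁.map_bot])
    map_top := e.inj (by rw [hf, e.map_top, e₁.map_top])
    map_lt := fun x y => by rw [e.map_lt, hf, hf, e₁.map_lt]
    map_P := fun j x => by rw [e.map_P, hf, e₁.map_P] }, hf⟩

theorem exists_range_eq_range_dualMap (iA : A.IdealFam) (nA : A.Natural) {iB : B.IdealFam}
    {C : Type} [LinearOrder C] [Finite C] {ρ : C → UpperSet J} {h : C → nB.Atom}
    (hh : IsRankedRigid ρ (fun b : nB.Atom => iB.rank b.val) h)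
    (e : Emb A (powerset C ρ (iB.rank ⊥)))
    (he : Set.range e.toFun ⊆ Set.range (ofRankedRigid hh).toFun) :
    ∃ g : nB.Atom → nA.Atom,
      IsRankedRigid (fun b : nB.Atom => iB.rank b.val) (fun a : nA.Atom => iA.rank a.val) g ∧
        Set.range e.toFun = Set.range (Natural.dualMap (g ∘ h)) := by
  obtain ⟨φ, hφ⟩ := e.exists_comp_eq _ he
  refine ⟨φ.dual, φ.dual_isRankedRigid iA iB, congrArg Set.range <| funext fun x => ?_⟩
  rw [← hφ]
  exact Set.ext fun c => (φ.dual_val_le_iff (h c) x).symm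

end Emb

end OrdAlg

/-!
STATEMENT 7: The class na(B_J) satisfies the Ramsey property.
-/

theorem naBJ_ramsey_property {J : Type} [LinearOrder J]
    (A B : OrdAlg J) (hA : A.InNaBJ) (hB : B.InNaBJ)
    (hAB : Nonempty (OrdAlg.Emb A B))
    (k : ℕ) (hk : 2 ≤ k) :
    ∃ C : OrdAlg J, C.InNaBJ ∧
      ∀ χ : Set C.carrier → Fin k,
        ∃ e : OrdAlg.Emb B C,
          ∀ S₁ ∈ OrdAlg.Copies A C, ∀ S₂ ∈ OrdAlg.Copies A C,
            S₁ ⊆ Set.range e.toFun → S₂ ⊆ Set.range e.toFun → χ S₁ = χ S₂ := by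
  obtain ⟨iA, nA, -⟩ := hA
  obtain ⟨iB, nB, b₀, hb₀, hb₀P⟩ := hB
  have : Nonempty (Fin k) := ⟨⟨0, by lia⟩⟩
  obtain ⟨C, _, _, ρ, hρ, -, hC⟩ := IsRankedRigid.exists_forall_comp_eq (κ := Fin k) nA.Atom nB.Atom
    (fun a => iA.rank a.val) (fun b => iB.rank b.val) (nB.rank_antitone iB)
  refine ⟨OrdAlg.powerset C ρ (iB.rank ⊥), OrdAlg.powerset_inNaBJ hρ ?_, fun χ => ?_⟩
  · obtain ⟨h, hh, -⟩ := hC fun _ => Classical.arbitrary _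
    obtain ⟨c, -, hc⟩ := hh.exists_eq_rank ⟨b₀, hb₀⟩
    exact ⟨c, hc.trans (SetLike.ext fun j => iff_of_false (hb₀P j) UpperSet.notMem_top)⟩
  · obtain ⟨h, hh, hχ⟩ := hC fun w => χ (Set.range (OrdAlg.Natural.dualMap w))
    refine ⟨OrdAlg.Emb.ofRankedRigid hh, ?_⟩
    rintro _ ⟨e₁, rfl⟩ _ ⟨e₂, rfl⟩ he₁ he₂
    obtain ⟨g₁, hg₁, h₁⟩ := e₁.exists_range_eq_range_dualMap iA nA hh he₁
    obtain ⟨g₂, hg₂, h₂⟩ := e₂.exists_range_eq_range_dualMap iA nA hh he₂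
    rw [h₁, h₂]
    exact hχ g₁ g₂ hg₁ hg₂
end
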